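/- Let X : ℂⁿ → ℂⁿ be holomorphic on a neighborhood of 0 with X(0) = 0, and suppose X preserves the real subspace: whenever every coordinate of x is real, every coordinate of X(x) is real. Let X_ℝ : ℝⁿ → ℝⁿ be the induced real analytic vector field near 0 ∈ ℝⁿ (the restriction of X to real points, with values read as real vectors). Then X_ℝ admits a convergent Poincaré–Dulac normalization over ℝ if and only if X admits a convergent Poincaré–Dulac normalization over ℂ. -/

import Mathlib

/-- `Y` is in Poincaré–Dulac normal form on the neighborhood `U` of `0`:
writing the Jordan–Chevalley decomposition `DY(0) = S + N` with `S` semisimple,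
`N` nilpotent and `S ∘ N = N ∘ S`, the Lie bracket `[Y, Yˢ]` (where `Yˢ x = S x`)
vanishes on `U`. -/
def InPDNormalForm (𝕂 : Type*) [NontriviallyNormedField 𝕂] {n : ℕ}
    (Y : (Fin n → 𝕂) → (Fin n → 𝕂)) (U : Set (Fin n → 𝕂)) : Prop :=
  ∃ S N : (Fin n → 𝕂) →L[𝕂] (Fin n → 𝕂),
    fderiv 𝕂 Y 0 = S + N ∧
    Module.End.IsSemisimple (S : Module.End 𝕂 (Fin n → 𝕂)) ∧
    IsNilpotent (N : Module.End 𝕂 (Fin n → 𝕂)) ∧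
    S ∘L N = N ∘L S ∧
    ∀ x ∈ U, VectorField.lieBracket 𝕂 Y (fun y => S y) x = 0

/-- `X` admits a convergent Poincaré–Dulac normalization: there are an analytic
vector field `Y` near `0`, in Poincaré–Dulac normal form with `Y 0 = 0`, and an
analytic map `φ` near `0` with `φ 0 = 0` and `Dφ(0)` invertible, such that
`Dφ(x) (Y x) = X (φ x)` for all `x` near `0`. -/
def AdmitsPDNormalization (𝕂 : Type*) [NontriviallyNormedField 𝕂] {n : ℕ}
    (X : (Fin n → 𝕂) → (Fin n → 𝕂)) : Prop :=
  ∃ (V : Set (Fin n → 𝕂)) (Y φ : (Fin n → 𝕂) → (Fin n → 𝕂)),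
    IsOpen V ∧ (0 : Fin n → 𝕂) ∈ V ∧
    AnalyticOnNhd 𝕂 Y V ∧ AnalyticOnNhd 𝕂 φ V ∧
    Y 0 = 0 ∧ φ 0 = 0 ∧ Function.Bijective (fderiv 𝕂 φ 0) ∧
    InPDNormalForm 𝕂 Y V ∧
    ∀ x ∈ V, fderiv 𝕂 φ x (Y x) = X (φ x)

section Algebra

open Polynomial

variable {K V : Type*} [Field K] [AddCommGroup V] [Module K V]

/-- A semisimple endomorphism is a polynomial multiple of its square. -/
lemma Module.End.IsSemisimple.exists_aeval_mul_sq [FiniteDimensional K V] {T : Module.End K V}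
    (hT : T.IsSemisimple) : ∃ a : K[X], T = aeval T a * T ^ 2 := by
  have hsq := hT.minpoly_squarefree
  obtain ⟨g, hg, hgT⟩ : ∃ g : K[X], IsCoprime X g ∧ minpoly K T ∣ X * g := by
    by_cases hX : X ∣ minpoly K T
    · obtain ⟨g, hg⟩ := hX
      refine ⟨g, (irreducible_X.coprime_iff_not_dvd).2 fun hd => ?_, hg.dvd⟩
      obtain ⟨q, rfl⟩ := hd
      exact not_isUnit_X (hsq X ⟨q, by rw [hg, mul_assoc]⟩)
    · exact ⟨_, (irreducible_X.coprime_iff_not_dvd).2 hX, dvd_mul_left _ _⟩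
  obtain ⟨a, b, hab⟩ := hg
  refine ⟨a, ?_⟩
  have h0 : aeval T (X * g) = 0 := by
    obtain ⟨c, hc⟩ := hgT
    rw [hc, map_mul, minpoly.aeval, zero_mul]
  have h1 : (X : K[X]) = a * X ^ 2 + b * (X * g) := by linear_combination -X * hab
  have h2 := congrArg (aeval T) h1
  rw [map_add, map_mul, map_mul, h0, mul_zero, add_zero, map_pow, aeval_X] at h2
  exact h2

/-- If `T` is semisimple, `U` is nilpotent and they commute, then modulo an invariant subspace
the kernel of `(T + U) * T` is contained in the kernel of `T`. -/
lemma Module.End.IsSemisimple.apply_mem_of_add_apply_apply_mem [FiniteDimensional K V]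
    {T U : Module.End K V} (hT : T.IsSemisimple) (hU : IsNilpotent U) (hTU : Commute T U)
    (P : Submodule K V) (hPT : ∀ v ∈ P, T v ∈ P) (hPU : ∀ v ∈ P, U v ∈ P) {v : V}
    (hv : T (T v) + U (T v) ∈ P) : T v ∈ P := by
  have hpow : ∀ j : ℕ, (T ^ j) (T v) - ((-U) ^ j) (T v) ∈ P := by
    intro j
    have hUj : ∀ i : ℕ, ∀ w ∈ P, ((-U) ^ i) w ∈ P := by
      intro i
      induction i with
      | zero => simp
      | succ i ih =>
        intro w hw
        rw [pow_succ, Module.End.mul_apply]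
        exact ih _ (by simpa using hPU w hw)
    induction j with
    | zero => simp
    | succ j ih =>
      have hc : T * (-U) ^ j = (-U) ^ j * T := (hTU.neg_right.pow_right j).eq
      have : (T ^ (j + 1)) (T v) - ((-U) ^ (j + 1)) (T v) =
          T ((T ^ j) (T v) - ((-U) ^ j) (T v)) + ((-U) ^ j) (T (T v) + U (T v)) := by
        rw [map_sub, map_add, ← Module.End.mul_apply T ((-U) ^ j), hc, pow_succ' T, pow_succ (-U)]
        simp only [Module.End.mul_apply, LinearMap.neg_apply, map_neg]
        abel
      rw [this]
      exact P.add_mem (hPT _ ih) (hUj _ _ hv)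
  obtain ⟨a, ha⟩ := hT.exists_aeval_mul_sq
  have haP : ∀ p : K[X], ∀ w ∈ P, aeval T p w ∈ P := by
    intro p w hw
    induction p using Polynomial.induction_on' with
    | add p q hp hq => simpa using P.add_mem hp hq
    | monomial n c =>
      rw [aeval_monomial, Module.End.mul_apply, Module.algebraMap_end_apply]
      refine P.smul_mem _ ?_
      induction n with
      | zero => simpa
      | succ n ih => rw [pow_succ']; exact hPT _ ih
  have hdown : ∀ j : ℕ, (T ^ (j + 1)) v ∈ P → T v ∈ P := by
    intro j
    induction j with
    | zero => simp
    | succ j ih =>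
      intro h
      apply ih
      have : T ^ (j + 1) = aeval T a * T ^ (j + 1 + 1) := by
        rw [show j + 1 + 1 = 2 + j by ring, pow_add T 2 j, ← mul_assoc, ← ha, ← pow_succ']
      rw [this]
      exact haP _ _ h
  obtain ⟨m, hm⟩ := hU
  refine hdown (m + 1) ?_
  have := hpow (m + 1)
  rwa [neg_pow, pow_succ U, hm, zero_mul, mul_zero, LinearMap.zero_apply, sub_zero,
    ← Module.End.mul_apply, ← pow_succ] at this

/-- Precomposition of a multilinear map with an endomorphism in the slot `j`. -/
def MultilinearMap.precompAt {k : ℕ} (j : Fin k) (S : Module.End K V) :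
    Module.End K (MultilinearMap K (fun _ : Fin k => V) V) :=
  MultilinearMap.compLinearMapₗ (Function.update (fun _ => LinearMap.id) j S)

lemma MultilinearMap.precompAt_apply {k : ℕ} (j : Fin k) (S : Module.End K V)
    (m : MultilinearMap K (fun _ : Fin k => V) V) (v : Fin k → V) :
    MultilinearMap.precompAt j S m v = m (Function.update v j (S (v j))) := by
  simp only [precompAt, compLinearMapₗ_apply, compLinearMap_apply]
  congr 1
  ext i
  by_cases h : i = j
  · subst h; simp
  · simp [h]

lemma MultilinearMap.precompAt_pow_apply {k : ℕ} (j : Fin k) (S : Module.End K V) (i : ℕ)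
    (m : MultilinearMap K (fun _ : Fin k => V) V) (v : Fin k → V) :
    (MultilinearMap.precompAt j S ^ i) m v = m (Function.update v j ((S ^ i) (v j))) := by
  induction i generalizing v with
  | zero => simp
  | succ i ih =>
    rw [pow_succ', Module.End.mul_apply, precompAt_apply, ih, pow_succ]
    simp [Module.End.mul_apply]

lemma MultilinearMap.aeval_precompAt_apply {k : ℕ} (j : Fin k) (S : Module.End K V) (p : K[X])
    (m : MultilinearMap K (fun _ : Fin k => V) V) (v : Fin k → V) :
    aeval (MultilinearMap.precompAt j S) p m v = m (Function.update v j (aeval S p (v j))) := by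
  induction p using Polynomial.induction_on' with
  | add p q hp hq => simp [hp, hq]
  | monomial n c => simp [aeval_monomial, Module.End.mul_apply, precompAt_pow_apply]

lemma MultilinearMap.precompAt_isSemisimple [FiniteDimensional K V] {k : ℕ} (j : Fin k)
    {S : Module.End K V} (hS : S.IsSemisimple) :
    (MultilinearMap.precompAt j S).IsSemisimple := by
  refine Module.End.isSemisimple_of_squarefree_aeval_eq_zero hS.minpoly_squarefree ?_
  ext m v
  rw [aeval_precompAt_apply, minpoly.aeval]
  simp

lemma MultilinearMap.precompAt_isNilpotent {k : ℕ} (j : Fin k)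
    {N : Module.End K V} (hN : IsNilpotent N) : IsNilpotent (MultilinearMap.precompAt j N) := by
  obtain ⟨i, hi⟩ := hN
  refine ⟨i, ?_⟩
  ext m v
  rw [precompAt_pow_apply, hi]
  simp

lemma MultilinearMap.precompAt_commute {k : ℕ} (i j : Fin k) {S N : Module.End K V}
    (h : Commute S N) :
    Commute (MultilinearMap.precompAt i S) (MultilinearMap.precompAt (k := k) j N) := by
  refine LinearMap.ext fun m => MultilinearMap.ext fun v => ?_
  simp only [Module.End.mul_apply, precompAt_apply]
  by_cases hij : i = j
  · subst hij
    have := LinearMap.congr_fun h.eq (v i)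
    simp only [Module.End.mul_apply] at this
    simp [this]
  · rw [Function.update_comm hij]
    simp [Function.update_of_ne hij, Function.update_of_ne (Ne.symm hij)]

/-- Postcomposition of a multilinear map with an endomorphism. -/
def MultilinearMap.postcomp (k : ℕ) :
    Module.End K V →ₐ[K] Module.End K (MultilinearMap K (fun _ : Fin k => V) V) where
  toFun S :=
    { toFun := fun m => S.compMultilinearMap m
      map_add' := fun _ _ => by ext; simp
      map_smul' := fun _ _ => by ext; simp }
  map_one' := by ext; simp
  map_mul' _ _ := by ext; simp
  map_zero' := by ext; simp
  map_add' _ _ := by ext; simp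
  commutes' _ := by ext; simp [Module.algebraMap_end_apply]

lemma MultilinearMap.postcomp_apply {k : ℕ} (S : Module.End K V)
    (m : MultilinearMap K (fun _ : Fin k => V) V) (v : Fin k → V) :
    MultilinearMap.postcomp k S m v = S (m v) := rfl

lemma MultilinearMap.precompAt_commute_postcomp {k : ℕ} (j : Fin k) (S N : Module.End K V) :
    Commute (MultilinearMap.precompAt j S) (MultilinearMap.postcomp k N) := by
  refine LinearMap.ext fun m => MultilinearMap.ext fun v => ?_
  simp only [Module.End.mul_apply, precompAt_apply, postcomp_apply]

/-- The operator `m ↦ ∑ⱼ m (…, S vⱼ, …) - S' (m v)` on multilinear maps, which is the action of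
the linear vector fields `S` and `S'` on homogeneous polynomial maps. -/
def MultilinearMap.homological (k : ℕ) (S S' : Module.End K V) :
    Module.End K (MultilinearMap K (fun _ : Fin k => V) V) :=
  ∑ j, MultilinearMap.precompAt j S - MultilinearMap.postcomp k S'

lemma MultilinearMap.homological_apply {k : ℕ} (S S' : Module.End K V)
    (m : MultilinearMap K (fun _ : Fin k => V) V) (v : Fin k → V) :
    MultilinearMap.homological k S S' m v =
      ∑ j, m (Function.update v j (S (v j))) - S' (m v) := by
  simp [homological, LinearMap.sum_apply, precompAt_apply, postcomp_apply]

lemma MultilinearMap.homological_isSemisimple [PerfectField K] [FiniteDimensional K V] (k : ℕ)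
    {S S' : Module.End K V} (hS : S.IsSemisimple) (hS' : S'.IsSemisimple) :
    (MultilinearMap.homological k S S').IsSemisimple := by
  have h1 : ∀ s : Finset (Fin k),
      (∑ j ∈ s, MultilinearMap.precompAt (k := k) j S).IsSemisimple := by
    intro s
    induction s using Finset.induction_on with
    | empty => simp
    | insert a s ha ih =>
      rw [Finset.sum_insert ha]
      exact Module.End.IsSemisimple.add_of_commute
        (Commute.sum_right _ _ _ fun i _ => precompAt_commute _ _ (Commute.refl _))
        (precompAt_isSemisimple a hS) ih
  have h2 : (MultilinearMap.postcomp k S').IsSemisimple := by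
    refine Module.End.isSemisimple_of_squarefree_aeval_eq_zero hS'.minpoly_squarefree ?_
    rw [aeval_algHom_apply, minpoly.aeval, _root_.map_zero]
  exact Module.End.IsSemisimple.sub_of_commute
    (Commute.sum_left _ _ _ fun i _ => precompAt_commute_postcomp _ _ _) (h1 _) h2

lemma MultilinearMap.homological_isNilpotent (k : ℕ)
    {N N' : Module.End K V} (hN : IsNilpotent N) (hN' : IsNilpotent N') :
    IsNilpotent (MultilinearMap.homological k N N') := by
  have h1 : ∀ s : Finset (Fin k),
      IsNilpotent (∑ j ∈ s, MultilinearMap.precompAt (k := k) j N) := by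
    intro s
    induction s using Finset.induction_on with
    | empty => simp
    | insert a s ha ih =>
      rw [Finset.sum_insert ha]
      exact Commute.isNilpotent_add
        (Commute.sum_right _ _ _ fun i _ => precompAt_commute _ _ (Commute.refl _))
        (precompAt_isNilpotent a hN) ih
  exact Commute.isNilpotent_sub
    (Commute.sum_left _ _ _ fun i _ => precompAt_commute_postcomp _ _ _) (h1 _)
    (hN'.map (MultilinearMap.postcomp k))

lemma MultilinearMap.homological_commute (k : ℕ) {S S' N N' : Module.End K V}
    (h : Commute S N) (h' : Commute S' N') :
    Commute (MultilinearMap.homological k S S') (MultilinearMap.homological k N N') := by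
  refine Commute.sub_left (Commute.sub_right ?_ ?_) (Commute.sub_right ?_ ?_)
  · exact Commute.sum_left _ _ _ fun i _ => Commute.sum_right _ _ _ fun j _ =>
      precompAt_commute _ _ h
  · exact Commute.sum_left _ _ _ fun i _ => precompAt_commute_postcomp _ _ _
  · exact Commute.sum_right _ _ _ fun i _ => (precompAt_commute_postcomp _ _ _).symm
  · exact h'.map (MultilinearMap.postcomp k)

end Algebra

section Diagonal

lemma MultilinearMap.apply_eq_sum_prod_smul {K F : Type*} [CommRing K] [AddCommGroup F]
    [Module K F] {k n : ℕ} (m : MultilinearMap K (fun _ : Fin k => Fin n → K) F)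
    (v : Fin k → Fin n → K) :
    m v = ∑ i : Fin k → Fin n, (∏ j, v j (i j)) • m (fun j => Pi.single (i j) 1) := by
  have hv : v = fun j => ∑ a, v j a • (Pi.single a (1 : K) : Fin n → K) := by
    ext j b
    simp [Finset.sum_apply, Pi.single_apply]
  conv_lhs => rw [hv]
  rw [m.map_sum]
  exact Finset.sum_congr rfl fun i _ => m.map_smul_univ (fun j => v j (i j)) _

lemma MultilinearMap.continuous_of_pi {n k : ℕ} {F : Type*} [NormedAddCommGroup F]
    [NormedSpace ℂ F] (m : MultilinearMap ℂ (fun _ : Fin k => Fin n → ℂ) F) : Continuous m := by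
  rw [show (m : (Fin k → Fin n → ℂ) → F) = _ from funext m.apply_eq_sum_prod_smul]
  fun_prop

lemma ContinuousMultilinearMap.hasFDerivAt_diag {E F : Type*} [NormedAddCommGroup E]
    [NormedSpace ℂ E] [NormedAddCommGroup F] [NormedSpace ℂ F] {k : ℕ}
    (p : ContinuousMultilinearMap ℂ (fun _ : Fin k => E) F) (y : E) :
    HasFDerivAt (fun y => p fun _ => y) (∑ i, p.toContinuousLinearMap (fun _ => y) i) y := by
  simpa using HasFDerivAt.multilinear_comp p (g := fun _ y => y)
    (g' := fun _ => ContinuousLinearMap.id ℂ E) fun _ => hasFDerivAt_id y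

lemma ContinuousMultilinearMap.homological_diag {n k : ℕ}
    (p : ContinuousMultilinearMap ℂ (fun _ : Fin k => Fin n → ℂ) (Fin n → ℂ))
    (S S' : (Fin n → ℂ) →L[ℂ] (Fin n → ℂ)) (y : Fin n → ℂ) :
    MultilinearMap.homological k (S : Module.End ℂ (Fin n → ℂ)) S' p.toMultilinearMap
      (fun _ => y) = fderiv ℂ (fun y => p fun _ => y) y (S y) - S' (p fun _ => y) := by
  rw [(p.hasFDerivAt_diag y).fderiv, MultilinearMap.homological_apply]
  simp

/-- The multilinear maps whose associated homogeneous polynomial map vanishes. -/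
def diagKer (n k : ℕ) :
    Submodule ℂ (MultilinearMap ℂ (fun _ : Fin k => Fin n → ℂ) (Fin n → ℂ)) where
  carrier := {m | ∀ y, m (fun _ => y) = 0}
  add_mem' hm hm' y := by simp [hm y, hm' y]
  zero_mem' y := by simp
  smul_mem' c m hm y := by simp [hm y]

lemma homological_mem_diagKer {n k : ℕ} (S S' : (Fin n → ℂ) →L[ℂ] (Fin n → ℂ))
    {m : MultilinearMap ℂ (fun _ : Fin k => Fin n → ℂ) (Fin n → ℂ)} (hm : m ∈ diagKer n k) :
    MultilinearMap.homological k (S : Module.End ℂ (Fin n → ℂ)) S' m ∈ diagKer n k := by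
  intro y
  have := ContinuousMultilinearMap.homological_diag ⟨m, m.continuous_of_pi⟩ S S' y
  refine this.trans ?_
  have h0 : (fun y => (⟨m, m.continuous_of_pi⟩ :
      ContinuousMultilinearMap ℂ (fun _ : Fin k => Fin n → ℂ) (Fin n → ℂ)) fun _ => y) =
      fun _ => 0 := funext hm
  rw [h0, show (ContinuousMultilinearMap.mk m m.continuous_of_pi) (fun _ => y) = 0 from hm y]
  simp

lemma homological_mem_diagKer_of_homological {n k : ℕ} {S N S' N' : (Fin n → ℂ) →L[ℂ] (Fin n → ℂ)}
    (hS : Module.End.IsSemisimple (S : Module.End ℂ (Fin n → ℂ)))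
    (hN : IsNilpotent (N : Module.End ℂ (Fin n → ℂ))) (hSN : S ∘L N = N ∘L S)
    (hS' : Module.End.IsSemisimple (S' : Module.End ℂ (Fin n → ℂ)))
    (hN' : IsNilpotent (N' : Module.End ℂ (Fin n → ℂ))) (hSN' : S' ∘L N' = N' ∘L S')
    {m : MultilinearMap ℂ (fun _ : Fin k => Fin n → ℂ) (Fin n → ℂ)}
    (hm : MultilinearMap.homological k ((S + N : (Fin n → ℂ) →L[ℂ] (Fin n → ℂ)) :
      Module.End ℂ (Fin n → ℂ)) (S' + N' : (Fin n → ℂ) →L[ℂ] (Fin n → ℂ))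
      (MultilinearMap.homological k (S : Module.End ℂ (Fin n → ℂ)) S' m) ∈ diagKer n k) :
    MultilinearMap.homological k (S : Module.End ℂ (Fin n → ℂ)) S' m ∈ diagKer n k := by
  refine (MultilinearMap.homological_isSemisimple k hS hS').apply_mem_of_add_apply_apply_mem
    (MultilinearMap.homological_isNilpotent k hN hN')
    (MultilinearMap.homological_commute k ?_ ?_) (diagKer n k)
    (fun _ => homological_mem_diagKer S S') (fun _ => homological_mem_diagKer N N') ?_
  · exact LinearMap.ext fun x => congrArg (fun f => f x) hSN
  · exact LinearMap.ext fun x => congrArg (fun f => f x) hSN'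
  · convert hm using 1
    refine MultilinearMap.ext fun v => ?_
    simp only [MultilinearMap.homological_apply, _root_.add_apply,
      ContinuousLinearMap.coe_coe, MultilinearMap.map_update_add,
      Finset.sum_add_distrib, ContinuousLinearMap.toLinearMap_add, LinearMap.add_apply]
    abel

end Diagonal

section Asymptotics

open Asymptotics Topology Filter

variable {E F : Type*} [NormedAddCommGroup E] [NormedSpace ℂ E] [NormedAddCommGroup F]
  [NormedSpace ℂ F]

/-- Cauchy's estimate for the derivative of `g` along `W` near `0`. -/
lemma isBigO_fderiv_apply {g : E → F} {W : E → E} {k : ℕ} (a : ℕ)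
    (hg : ∀ᶠ y in 𝓝 0, DifferentiableAt ℂ g y) (hgO : g =O[𝓝 0] fun y => ‖y‖ ^ k)
    (hW : W =O[𝓝 0] fun y => ‖y‖ ^ (a + 1)) :
    (fun y => fderiv ℂ g y (W y)) =O[𝓝 0] fun y => ‖y‖ ^ (k + a) := by
  obtain ⟨K, hK0, hK⟩ := hgO.exists_pos
  obtain ⟨C, hC0, hC⟩ := hW.exists_pos
  obtain ⟨δ, hδ, hball⟩ := Metric.eventually_nhds_iff_ball.1 (hg.and hK.bound)
  refine IsBigO.of_bound (K * 2 ^ k * C) ?_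
  filter_upwards [hC.bound, Metric.ball_mem_nhds (0 : E) (half_pos hδ)] with y hyW hyδ
  rw [mem_ball_zero_iff] at hyδ
  rw [norm_pow, norm_norm] at hyW ⊢
  rcases eq_or_ne y 0 with rfl | hy
  · have : W 0 = 0 := by simpa using hyW
    rw [this, map_zero, norm_zero, norm_zero]
    positivity
  · have hy0 : 0 < ‖y‖ := norm_pos_iff.2 hy
    set R : ℝ := (C * ‖y‖ ^ a)⁻¹ with hR
    have hR0 : 0 < R := by positivity
    have hRW : R * ‖W y‖ ≤ ‖y‖ := by
      calc R * ‖W y‖ ≤ R * (C * ‖y‖ ^ (a + 1)) := by gcongr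
        _ = ‖y‖ := by rw [hR, pow_succ]; field_simp
    have hmem : ∀ t : ℂ, ‖t‖ ≤ R → ‖y + t • W y‖ ≤ 2 * ‖y‖ := by
      intro t ht
      calc ‖y + t • W y‖ ≤ ‖y‖ + ‖t‖ * ‖W y‖ := (norm_add_le _ _).trans_eq (by rw [norm_smul])
        _ ≤ ‖y‖ + R * ‖W y‖ := by gcongr
        _ ≤ 2 * ‖y‖ := by linarith
    have hin : ∀ t : ℂ, ‖t‖ ≤ R → y + t • W y ∈ Metric.ball (0 : E) δ := by
      intro t ht
      rw [mem_ball_zero_iff]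
      linarith [hmem t ht]
    have hline : ∀ t : ℂ, HasDerivAt (fun t : ℂ => y + t • W y) (W y) t := by
      intro t
      simpa using ((hasDerivAt_id t).smul_const (W y)).const_add y
    have hdiff : ∀ t : ℂ, ‖t‖ ≤ R →
        HasDerivAt (fun t : ℂ => g (y + t • W y)) (fderiv ℂ g (y + t • W y) (W y)) t := by
      intro t ht
      exact (hball _ (hin t ht)).1.hasFDerivAt.comp_hasDerivAt t (hline t)
    have h0 := hdiff 0 (by simpa using hR0.le)
    have key := Complex.norm_deriv_le_of_forall_mem_sphere_norm_le (c := 0) (R := R)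
      (C := K * (2 * ‖y‖) ^ k) (f := fun t : ℂ => g (y + t • W y)) hR0 ?_ ?_
    · rw [h0.deriv] at key
      simp only [zero_smul, add_zero] at key
      refine key.trans_eq ?_
      rw [hR, div_inv_eq_mul, mul_pow, pow_add]
      ring
    · refine DifferentiableOn.diffContOnCl fun t ht => ?_
      have ht' : ‖t‖ ≤ R := by
        have := Metric.closure_ball_subset_closedBall ht
        simpa using this
      exact (hdiff t ht').differentiableAt.differentiableWithinAt
    · intro t ht
      have ht' : ‖t‖ ≤ R := by simpa using (mem_sphere_zero_iff_norm.1 ht).le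
      have hb := (hball _ (hin t ht')).2
      rw [norm_pow, norm_norm] at hb
      refine hb.trans ?_
      gcongr
      exact hmem t ht'

lemma ContinuousMultilinearMap.isBigO_diag {k : ℕ}
    (p : ContinuousMultilinearMap ℂ (fun _ : Fin k => E) F) :
    (fun y => p fun _ => y) =O[𝓝 0] fun y => ‖y‖ ^ k := by
  refine IsBigO.of_bound ‖p‖ (Eventually.of_forall fun y => ?_)
  simpa using p.le_opNorm fun _ => y

lemma AnalyticAt.eventually_eq_zero_of_isBigO_pow {f : E → F} (hf : AnalyticAt ℂ f 0)
    (h : ∀ k : ℕ, f =O[𝓝 0] fun y => ‖y‖ ^ k) : ∀ᶠ y in 𝓝 0, f y = 0 := by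
  obtain ⟨p, hp⟩ := hf
  have hdiag : ∀ k y, p k (fun _ => y) = 0 := by
    intro k
    induction k using Nat.strong_induction_on with
    | _ k ih =>
      refine Asymptotics.IsBigO.continuousMultilinearMap_apply_eq_zero ?_
      have h1 := hp.isBigO_sub_partialSum_pow (k + 1)
      refine ((h (k + 1)).sub h1).congr_left fun y => ?_
      rw [FormalMultilinearSeries.partialSum, Finset.sum_range_succ,
        Finset.sum_eq_zero fun i hi => ih i (Finset.mem_range.1 hi) y]
      simp
  obtain ⟨r, hr⟩ := hp
  filter_upwards [Metric.eball_mem_nhds (0 : E) hr.r_pos] with y hy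
  have := hr.hasSum hy
  simp only [hdiag, zero_add] at this
  exact (this.unique hasSum_zero)

end Asymptotics

section Centralizer

open Asymptotics Topology Filter VectorField

lemma AnalyticAt.clm_apply {𝕜 E F G : Type*} [NontriviallyNormedField 𝕜]
    [NormedAddCommGroup E] [NormedSpace 𝕜 E] [NormedAddCommGroup F] [NormedSpace 𝕜 F]
    [NormedAddCommGroup G] [NormedSpace 𝕜 G] {f : E → F →L[𝕜] G} {g : E → F} {x : E}
    (hf : AnalyticAt 𝕜 f x) (hg : AnalyticAt 𝕜 g x) : AnalyticAt 𝕜 (fun y => f y (g y)) x :=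
  ((ContinuousLinearMap.apply 𝕜 G).flip.analyticAt_bilinear (f x, g x)).comp₂ hf hg

lemma ContDiffAt.fderiv_apply_lieBracket_of_related {𝕜 E F : Type*} [RCLike 𝕜]
    [NormedAddCommGroup E] [NormedSpace 𝕜 E] [NormedAddCommGroup F] [NormedSpace 𝕜 F]
    {f : E → F} {V W : E → E} {V' W' : F → F} {x : E} (hf : ContDiffAt 𝕜 2 f x)
    (hV : DifferentiableAt 𝕜 V x) (hW : DifferentiableAt 𝕜 W x)
    (hV' : DifferentiableAt 𝕜 V' (f x)) (hW' : DifferentiableAt 𝕜 W' (f x))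
    (hVV' : ∀ᶠ y in 𝓝 x, fderiv 𝕜 f y (V y) = V' (f y))
    (hWW' : ∀ᶠ y in 𝓝 x, fderiv 𝕜 f y (W y) = W' (f y)) :
    fderiv 𝕜 f x (lieBracket 𝕜 V W x) = lieBracket 𝕜 V' W' (f x) := by
  have hfd := hf.differentiableAt (by norm_num)
  rw [fderiv_apply_lieBracket hf (by simp) hW hV, EventuallyEq.fderiv_eq hVV',
    EventuallyEq.fderiv_eq hWW', fderiv_fun_comp x hW' hfd,
    fderiv_fun_comp x hV' hfd, lieBracket_eq]
  simp [hVV'.self_of_nhds, hWW'.self_of_nhds]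

/-- The failure of `χ` to intertwine `S` and `S'` satisfies a linear equation. -/
lemma fderiv_intertwiningDefect {n : ℕ} {χ Y Y' : (Fin n → ℂ) → (Fin n → ℂ)}
    {S S' : (Fin n → ℂ) →L[ℂ] (Fin n → ℂ)} {y : Fin n → ℂ}
    (hχ : AnalyticAt ℂ χ y) (hY : DifferentiableAt ℂ Y y) (hY' : DifferentiableAt ℂ Y' (χ y))
    (hYS : lieBracket ℂ Y (fun x => S x) y = 0)
    (hYS' : lieBracket ℂ Y' (fun x => S' x) (χ y) = 0)
    (h : ∀ᶠ x in 𝓝 y, fderiv ℂ χ x (Y x) = Y' (χ x)) :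
    fderiv ℂ (fun x => fderiv ℂ χ x (S x) - S' (χ x)) y (Y y) =
      fderiv ℂ Y' (χ y) (fderiv ℂ χ y (S y) - S' (χ y)) := by
  have hd := hχ.differentiableAt
  have h1 := fderiv_apply_lieBracket (hχ.contDiffAt (n := 2)) (by simp)
    S.differentiableAt hY
  rw [hYS, EventuallyEq.fderiv_eq h, fderiv_fun_comp y hY' hd, map_zero, eq_comm,
    sub_eq_zero] at h1
  have h2 : S' (Y' (χ y)) = fderiv ℂ Y' (χ y) (S' (χ y)) := by
    rw [lieBracket_eq, sub_eq_zero] at hYS'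
    simpa using hYS'
  have hSχ : DifferentiableAt ℂ (fun x => S' (χ x)) y := S'.differentiableAt.comp y hd
  rw [fderiv_fun_sub (hχ.fderiv.differentiableAt.clm_apply S.differentiableAt)
    hSχ, _root_.sub_apply, h1,
    fderiv_fun_comp y S'.differentiableAt hd]
  simp [h.self_of_nhds, h2]

/-- An analytic map between vector fields in Poincaré–Dulac normal form intertwines the semisimple
parts of their linearizations. -/
theorem eventually_fderiv_apply_semisimple {n : ℕ} {χ Y Y' : (Fin n → ℂ) → (Fin n → ℂ)}
    {S N S' N' : (Fin n → ℂ) →L[ℂ] (Fin n → ℂ)}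
    (hS : Module.End.IsSemisimple (S : Module.End ℂ (Fin n → ℂ)))
    (hN : IsNilpotent (N : Module.End ℂ (Fin n → ℂ))) (hSN : S ∘L N = N ∘L S)
    (hS' : Module.End.IsSemisimple (S' : Module.End ℂ (Fin n → ℂ)))
    (hN' : IsNilpotent (N' : Module.End ℂ (Fin n → ℂ))) (hSN' : S' ∘L N' = N' ∘L S')
    (hχ : AnalyticAt ℂ χ 0) (hY : AnalyticAt ℂ Y 0) (hY' : AnalyticAt ℂ Y' 0)
    (hχ0 : χ 0 = 0) (hY0 : Y 0 = 0)
    (hYA : fderiv ℂ Y 0 = S + N) (hYA' : fderiv ℂ Y' 0 = S' + N')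
    (hYS : ∀ᶠ x in 𝓝 0, lieBracket ℂ Y (fun x => S x) x = 0)
    (hYS' : ∀ᶠ x in 𝓝 0, lieBracket ℂ Y' (fun x => S' x) x = 0)
    (h : ∀ᶠ x in 𝓝 0, fderiv ℂ χ x (Y x) = Y' (χ x)) :
    ∀ᶠ x in 𝓝 0, fderiv ℂ χ x (S x) = S' (χ x) := by
  set E : (Fin n → ℂ) → (Fin n → ℂ) := fun x => fderiv ℂ χ x (S x) - S' (χ x) with hE
  have hEan : AnalyticAt ℂ E 0 := by
    refine AnalyticAt.sub ?_ ?_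
    · exact AnalyticAt.clm_apply hχ.fderiv (S.analyticAt 0)
    · exact (S'.analyticAt _).comp hχ
  have hχt : Tendsto χ (𝓝 0) (𝓝 0) := by simpa [hχ0] using hχ.continuousAt.tendsto
  have hEq : ∀ᶠ y in 𝓝 0, fderiv ℂ E y (Y y) = fderiv ℂ Y' (χ y) (E y) := by
    filter_upwards [hχ.eventually_analyticAt, hY.eventually_analyticAt,
      hχt.eventually hY'.eventually_analyticAt, hYS, hχt.eventually hYS', h.eventually_nhds]
      with y h1 h2 h3 h4 h5 h6
    exact fderiv_intertwiningDefect h1 h2.differentiableAt h3.differentiableAt h4 h5 h6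
  obtain ⟨p, hp⟩ := hχ
  have hχ : AnalyticAt ℂ χ 0 := ⟨p, hp⟩
  let f : ∀ k, ContinuousMultilinearMap ℂ (fun _ : Fin k => Fin n → ℂ) (Fin n → ℂ) := fun k =>
    ⟨MultilinearMap.homological k (S : Module.End ℂ (Fin n → ℂ)) S' (p k).toMultilinearMap,
      MultilinearMap.continuous_of_pi _⟩
  have hf : ∀ k y, f k (fun _ => y) =
      fderiv ℂ (fun y => p k fun _ => y) y (S y) - S' (p k fun _ => y) := fun k y =>
    ContinuousMultilinearMap.homological_diag (p k) S S' y
  have hpd : ∀ k y, DifferentiableAt ℂ (fun y => p k fun _ => y) y := fun k y =>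
    ((p k).hasFDerivAt_diag y).differentiableAt
  have hlin : ∀ T : (Fin n → ℂ) →L[ℂ] (Fin n → ℂ),
      (fun y => T y) =O[𝓝 0] fun y => ‖y‖ ^ (0 + 1) := fun T => by
    simpa using (T.isBigO_id (𝓝 0)).norm_right
  have hEsum : ∀ k, (fun y => E y - ∑ j ∈ Finset.range k, f j fun _ => y) =O[𝓝 0]
      fun y => ‖y‖ ^ k := by
    intro k
    have hr := hp.isBigO_sub_partialSum_pow k
    simp only [zero_add, FormalMultilinearSeries.partialSum] at hr
    have hrd : ∀ᶠ y in 𝓝 0, DifferentiableAt ℂ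
        (fun y => χ y - ∑ j ∈ Finset.range k, p j fun _ => y) y := by
      filter_upwards [hχ.eventually_analyticAt] with y hy
      exact hy.differentiableAt.sub (DifferentiableAt.fun_sum fun j _ => hpd j y)
    have h1 := isBigO_fderiv_apply 0 hrd hr (hlin S)
    have h2 := (S'.isBigO_comp _ (𝓝 0)).trans hr
    refine (h1.sub h2).congr' ?_ (by simp)
    filter_upwards [hχ.eventually_analyticAt] with y hy
    rw [fderiv_fun_sub hy.differentiableAt (DifferentiableAt.fun_sum fun j _ => hpd j y),
      fderiv_fun_sum fun j _ => hpd j y]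
    simp only [hE, hf, Finset.sum_sub_distrib, _root_.sub_apply, _root_.sum_apply, map_sub, map_sum]
    abel
  have hYlin : (fun y => Y y - (S + N) y) =O[𝓝 0] fun y => ‖y‖ ^ (1 + 1) := by
    obtain ⟨q, hq⟩ := hY
    have hq1 := hq.isBigO_sub_partialSum_pow 2
    refine hq1.congr_left fun y => ?_
    have hq0 : q 0 (fun _ => y) = 0 := (hq.coeff_zero _).trans hY0
    have hqA : (S + N) y = q 1 (fun _ => y) := by
      rw [← hYA, hq.hasFDerivAt.fderiv]
      rfl
    rw [zero_add, FormalMultilinearSeries.partialSum, Finset.sum_range_succ,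
      Finset.sum_range_one, hq0, zero_add, hqA]
  have hYO : Y =O[𝓝 0] fun y => ‖y‖ ^ (0 + 1) := by
    have := hY.differentiableAt.isBigO_sub
    simpa [hY0] using this.norm_right
  have hM : (fun y => fderiv ℂ Y' (χ y) - (S' + N')) =O[𝓝 0] fun y => ‖y‖ := by
    have hM := AnalyticAt.comp (f := χ) (x := 0) (hχ0 ▸ hY'.fderiv) hχ
    have := hM.differentiableAt.isBigO_sub
    simpa [hχ0, hYA'] using this.norm_right
  have hdiag : ∀ k y, f k (fun _ => y) = 0 := by
    intro k
    induction k using Nat.strong_induction_on with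
    | _ k ih =>
      have hEk : E =O[𝓝 0] fun y => ‖y‖ ^ k := by
        refine (hEsum k).congr_left fun y => ?_
        rw [Finset.sum_eq_zero fun i hi => ih i (Finset.mem_range.1 hi) y, sub_zero]
      have hEe : (fun y => E y - f k fun _ => y) =O[𝓝 0] fun y => ‖y‖ ^ (k + 1) := by
        refine (hEsum (k + 1)).congr_left fun y => ?_
        rw [Finset.sum_range_succ, Finset.sum_eq_zero fun i hi => ih i (Finset.mem_range.1 hi) y,
          zero_add]
      have hfd : ∀ y, DifferentiableAt ℂ (fun y => f k fun _ => y) y := fun y =>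
        ((f k).hasFDerivAt_diag y).differentiableAt
      have t1 := isBigO_fderiv_apply 1 (Eventually.of_forall hfd) (f k).isBigO_diag hYlin
      have t2 := isBigO_fderiv_apply 0 (hEan.eventually_analyticAt.mono fun y hy =>
        hy.differentiableAt.sub (hfd y)) hEe hYO
      have t3 : (fun y => (fderiv ℂ Y' (χ y) - (S' + N')) (E y)) =O[𝓝 0]
          fun y => ‖y‖ ^ (k + 1) := by
        refine (IsBigO.of_bound 1 (Eventually.of_forall fun y => ?_)).trans
          ((hM.norm_left.mul hEk.norm_left).congr_right fun y => by ring)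
        simpa using (fderiv ℂ Y' (χ y) - (S' + N')).le_opNorm (E y)
      have t4 := ((S' + N').isBigO_comp _ (𝓝 0)).trans hEe
      let m := MultilinearMap.homological k ((S + N : (Fin n → ℂ) →L[ℂ] (Fin n → ℂ)) :
        Module.End ℂ (Fin n → ℂ)) (S' + N' : (Fin n → ℂ) →L[ℂ] (Fin n → ℂ)) (f k).toMultilinearMap
      refine homological_mem_diagKer_of_homological hS hN hSN hS' hN' hSN'
        (m := (p k).toMultilinearMap) ?_
      refine Asymptotics.IsBigO.continuousMultilinearMap_apply_eq_zero
        (p := ⟨m, m.continuous_of_pi⟩) ?_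
      refine (((t3.sub t1).sub t2).add t4).congr' ?_ EventuallyEq.rfl
      filter_upwards [hEq, hEan.eventually_analyticAt] with y hy hya
      have hmy := ContinuousMultilinearMap.homological_diag (f k) (S + N) (S' + N') y
      refine Eq.trans ?_ hmy.symm
      rw [fderiv_sub hya.differentiableAt (hfd y)]
      simp only [_root_.sub_apply, map_sub, hy]
      abel
  have hE0 : ∀ᶠ y in 𝓝 0, E y = 0 := hEan.eventually_eq_zero_of_isBigO_pow fun k =>
    (hEsum k).congr_left fun y => by rw [Finset.sum_eq_zero fun i _ => hdiag i y, sub_zero]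
  exact hE0.mono fun y hy => sub_eq_zero.1 hy

end Centralizer

section LocalInverse

open Topology Filter
open scoped ContDiff

lemma AnalyticAt.exists_local_inverse {𝕜 E : Type*} [RCLike 𝕜] [NormedAddCommGroup E]
    [NormedSpace 𝕜 E] [CompleteSpace E] {φ : E → E} (hφ : AnalyticAt 𝕜 φ 0) (h0 : φ 0 = 0)
    (hb : Function.Bijective (fderiv 𝕜 φ 0)) :
    ∃ ψ : E → E, AnalyticAt 𝕜 ψ 0 ∧ ψ 0 = 0 ∧ (∀ᶠ x in 𝓝 0, φ (ψ x) = x) ∧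
      ∀ᶠ x in 𝓝 0, ψ (φ x) = x := by
  let e : E ≃L[𝕜] E := ContinuousLinearEquiv.ofBijective (fderiv 𝕜 φ 0)
    (LinearMap.ker_eq_bot.2 hb.1) (LinearMap.range_eq_top.2 hb.2)
  have he : HasFDerivAt φ (e : E →L[𝕜] E) 0 := hφ.differentiableAt.hasFDerivAt
  have hc : ContDiffAt 𝕜 ω φ 0 := hφ.contDiffAt
  have hs := hc.hasStrictFDerivAt' he (by simp)
  refine ⟨hc.localInverse he (by simp), ?_, ?_, ?_, hs.eventually_left_inverse⟩
  · have := (hc.to_localInverse he (by simp)).analyticAt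
    rwa [h0] at this
  · have := hc.localInverse_apply_image he (by simp)
    rwa [h0] at this
  · have := hs.eventually_right_inverse
    rwa [h0] at this

lemma fderiv_comp_fderiv_of_eventually_eq_id {𝕜 E : Type*} [RCLike 𝕜] [NormedAddCommGroup E]
    [NormedSpace 𝕜 E] {φ ψ : E → E} {x : E} (hφ : DifferentiableAt 𝕜 φ (ψ x))
    (hψ : DifferentiableAt 𝕜 ψ x) (h : ∀ᶠ y in 𝓝 x, φ (ψ y) = y) (v : E) :
    fderiv 𝕜 φ (ψ x) (fderiv 𝕜 ψ x v) = v := by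
  have h1 := EventuallyEq.fderiv_eq (𝕜 := 𝕜) h
  rw [fderiv_fun_comp x hφ hψ, fderiv_fun_id] at h1
  exact congrArg (fun T : E →L[𝕜] E => T v) h1

end LocalInverse

section Conjugation

open Topology Filter

variable {n : ℕ}

/-- The power series of `star ∘ f ∘ star`, where `p` is the power series of `f`. -/
noncomputable def FormalMultilinearSeries.starStar
    (p : FormalMultilinearSeries ℂ (Fin n → ℂ) (Fin n → ℂ)) :
    FormalMultilinearSeries ℂ (Fin n → ℂ) (Fin n → ℂ) := fun k =>
  ContinuousMultilinearMap.mk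
    (MultilinearMap.mk' (fun v : Fin k → Fin n → ℂ => star (p k fun i => star (v i)))
      (fun v i x y => by
        simp only [Function.apply_update (fun _ => star), star_add,
          ContinuousMultilinearMap.map_update_add])
      (fun v i c x => by
        simp only [Function.apply_update (fun _ => star), star_smul,
          ContinuousMultilinearMap.map_update_smul, star_star]))
    (by
      change Continuous fun v : Fin k → Fin n → ℂ => star (p k fun i => star (v i))
      fun_prop)

lemma AnalyticAt.star_star {f : (Fin n → ℂ) → (Fin n → ℂ)} {x : Fin n → ℂ}
    (hf : AnalyticAt ℂ f (star x)) : AnalyticAt ℂ (star ∘ f ∘ star) x := by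
  obtain ⟨p, r, hp⟩ := hf
  refine ⟨p.starStar, r, ?_, hp.r_pos, fun {y} hy => ?_⟩
  · refine hp.r_le.trans (FormalMultilinearSeries.radius_le_of_le fun k => ?_)
    refine ContinuousMultilinearMap.opNorm_le_bound (norm_nonneg _) fun v => ?_
    refine (norm_star (p k fun i => star (v i))).trans_le ?_
    simpa using (p k).le_opNorm fun i => star (v i)
  · have hy' : star y ∈ Metric.eball 0 r := by
      rw [mem_eball_zero_iff] at hy ⊢
      simpa only [enorm_eq_nnnorm, nnnorm_star] using hy
    have h := (hp.hasSum hy').star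
    rw [← star_add] at h
    exact h

lemma fderiv_star_star (f : (Fin n → ℂ) → (Fin n → ℂ)) {x : Fin n → ℂ}
    (hf : DifferentiableAt ℂ f (star x)) (v : Fin n → ℂ) :
    fderiv ℂ (star ∘ f ∘ star) x v = star (fderiv ℂ f (star x) (star v)) := by
  have := hf.hasFDerivAt.star_star
  rw [_root_.star_star] at this
  rw [this.fderiv]
  simp

end Conjugation

section Real

open Topology Filter

/-- The inclusion of `ℝⁿ` in `ℂⁿ`. -/
noncomputable def piOfReal (n : ℕ) : (Fin n → ℝ) →L[ℝ] (Fin n → ℂ) :=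
  ContinuousLinearMap.piMap fun _ => Complex.ofRealCLM

/-- The coordinatewise real part. -/
noncomputable def piRe (n : ℕ) : (Fin n → ℂ) →L[ℝ] (Fin n → ℝ) :=
  ContinuousLinearMap.piMap fun _ => Complex.reCLM

variable {n : ℕ}

@[simp] lemma piOfReal_apply (x : Fin n → ℝ) (j : Fin n) : piOfReal n x j = x j := rfl

@[simp] lemma piRe_apply (z : Fin n → ℂ) (j : Fin n) : piRe n z j = (z j).re := rfl

@[simp] lemma piRe_piOfReal (x : Fin n → ℝ) : piRe n (piOfReal n x) = x := by
  ext; simp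

@[simp] lemma star_piOfReal (x : Fin n → ℝ) : star (piOfReal n x) = piOfReal n x := by
  ext; simp

lemma piOfReal_piRe {z : Fin n → ℂ} (hz : star z = z) : piOfReal n (piRe n z) = z := by
  ext j
  exact Complex.conj_eq_iff_re.1 (congrFun hz j)

lemma norm_piOfReal (x : Fin n → ℝ) : ‖piOfReal n x‖ = ‖x‖ := by
  simp [Pi.norm_def]

lemma norm_piRe_le (z : Fin n → ℂ) : ‖piRe n z‖ ≤ ‖z‖ :=
  (pi_norm_le_iff_of_nonneg (norm_nonneg z)).2 fun j =>
    (Complex.abs_re_le_norm (z j)).trans (norm_le_pi_norm z j)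

lemma eq_piOfReal_add (z : Fin n → ℂ) :
    z = piOfReal n (piRe n z) + Complex.I • piOfReal n (piRe n (-Complex.I • z)) := by
  ext j
  simp [Complex.ext_iff]

lemma ContinuousLinearMap.ext_piOfReal {F : Type*} [NormedAddCommGroup F] [NormedSpace ℂ F]
    {A B : (Fin n → ℂ) →L[ℂ] F} (h : ∀ x, A (piOfReal n x) = B (piOfReal n x)) : A = B := by
  ext1 z
  rw [eq_piOfReal_add z]
  simp only [map_add, map_smul, h]

lemma tendsto_piOfReal : Tendsto (piOfReal n) (𝓝 0) (𝓝 0) := by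
  simpa using (piOfReal n).continuous.tendsto 0

/-- A holomorphic map vanishing on the real points near `0` vanishes near `0`. -/
lemma AnalyticAt.eventually_eq_zero_of_piOfReal {f : (Fin n → ℂ) → (Fin n → ℂ)}
    (hf : AnalyticAt ℂ f 0)
    (h : ∀ᶠ x in 𝓝 0, f (piOfReal n x) = 0) : ∀ᶠ z in 𝓝 0, f z = 0 := by
  obtain ⟨δ₁, hδ₁, h₁⟩ := Metric.eventually_nhds_iff_ball.1 hf.eventually_analyticAt
  obtain ⟨δ₂, hδ₂, h₂⟩ := Metric.eventually_nhds_iff_ball.1 h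
  filter_upwards [Metric.ball_mem_nhds (0 : Fin n → ℂ) (lt_min hδ₁ hδ₂)] with z hz
  set δ := min δ₁ δ₂
  set x := piRe n z
  set y := piRe n (-Complex.I • z)
  let L : ℂ → (Fin n → ℂ) := fun t => piOfReal n x + t • piOfReal n y
  have hL : AnalyticOnNhd ℂ L Set.univ := fun t _ => by fun_prop
  have hLr : ∀ t : ℝ, L t = piOfReal n (x + t • y) := fun t => by
    ext j; simp [L]
  have hconv : Convex ℝ (L ⁻¹' Metric.ball 0 δ) := by
    exact ((convex_ball 0 δ).translate_preimage_right (piOfReal n x)).is_linear_preimage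
      (f := fun t : ℂ => t • piOfReal n y) ⟨fun _ _ => add_smul _ _ _, fun _ _ => smul_assoc _ _ _⟩
  have h0 : (0 : ℂ) ∈ L ⁻¹' Metric.ball 0 δ := by
    simp only [Set.mem_preimage, L, zero_smul, add_zero, mem_ball_zero_iff, norm_piOfReal] at hz ⊢
    exact (norm_piRe_le z).trans_lt hz
  have hI : Complex.I ∈ L ⁻¹' Metric.ball 0 δ := by
    rw [Set.mem_preimage]
    convert hz
    exact (eq_piOfReal_add z).symm
  have key := AnalyticOnNhd.eqOn_zero_of_preconnected_of_frequently_eq_zero (f := f ∘ L)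
    (fun t ht => (h₁ _ (Metric.ball_subset_ball (min_le_left _ _) ht)).comp (hL t trivial))
    hconv.isPreconnected h0 ?_ hI
  · exact (congrArg f (eq_piOfReal_add z)).trans key
  · have hev : ∀ᶠ t : ℝ in 𝓝 0, f (L t) = 0 := by
      have hc : ContinuousAt (fun t : ℝ => x + t • y) 0 := by fun_prop
      have hx : x + (0 : ℝ) • y ∈ Metric.ball (0 : Fin n → ℝ) δ₂ := by
        simp only [zero_smul, add_zero, mem_ball_zero_iff] at hz ⊢
        exact (norm_piRe_le z).trans_lt (hz.trans_le (min_le_right _ _))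
      filter_upwards [hc (Metric.isOpen_ball.mem_nhds hx)] with t ht
      rw [hLr]
      exact h₂ _ ht
    have ht : Tendsto (fun t : ℝ => (t : ℂ)) (𝓝[≠] 0) (𝓝[≠] 0) := by
      refine tendsto_nhdsWithin_of_tendsto_nhds_of_eventually_within _
        ((Complex.continuous_ofReal.tendsto' 0 0 (by simp)).mono_left nhdsWithin_le_nhds) ?_
      filter_upwards [self_mem_nhdsWithin] with t ht
      simpa using ht
    exact ht.frequently (hev.filter_mono nhdsWithin_le_nhds).frequently

end Real

section Complexification

open Topology Filter
open scoped NNReal ENNReal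

variable {n : ℕ}

/-- The `ℂ`-multilinear extension of an `ℝ`-multilinear map. -/
noncomputable def ContinuousMultilinearMap.complexify {k : ℕ}
    (m : ContinuousMultilinearMap ℝ (fun _ : Fin k => Fin n → ℝ) (Fin n → ℝ)) :
    ContinuousMultilinearMap ℂ (fun _ : Fin k => Fin n → ℂ) (Fin n → ℂ) :=
  ∑ i : Fin k → Fin n, ((ContinuousMultilinearMap.mkPiAlgebra ℂ (Fin k) ℂ).compContinuousLinearMap
    fun j => ContinuousLinearMap.proj (i j)).smulRight
      (piOfReal n (m fun j => Pi.single (i j) 1))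

lemma ContinuousMultilinearMap.complexify_apply {k : ℕ}
    (m : ContinuousMultilinearMap ℝ (fun _ : Fin k => Fin n → ℝ) (Fin n → ℝ))
    (v : Fin k → Fin n → ℂ) : m.complexify v =
      ∑ i : Fin k → Fin n, (∏ j, v j (i j)) • piOfReal n (m fun j => Pi.single (i j) 1) := by
  simp [complexify]

lemma ContinuousMultilinearMap.complexify_piOfReal {k : ℕ}
    (m : ContinuousMultilinearMap ℝ (fun _ : Fin k => Fin n → ℝ) (Fin n → ℝ))
    (v : Fin k → Fin n → ℝ) :
    m.complexify (fun j => piOfReal n (v j)) = piOfReal n (m v) := by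
  rw [complexify_apply, ← ContinuousMultilinearMap.coe_coe m,
    m.toMultilinearMap.apply_eq_sum_prod_smul v, _root_.map_sum]
  refine Finset.sum_congr rfl fun i _ => ?_
  ext l
  simp

lemma ContinuousMultilinearMap.norm_complexify_le {k : ℕ}
    (m : ContinuousMultilinearMap ℝ (fun _ : Fin k => Fin n → ℝ) (Fin n → ℝ)) :
    ‖m.complexify‖ ≤ (n : ℝ) ^ k * ‖m‖ := by
  refine ContinuousMultilinearMap.opNorm_le_bound (by positivity) fun v => ?_
  rw [complexify_apply]
  refine (norm_sum_le_of_le (f := fun i : Fin k → Fin n =>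
    (∏ j, v j (i j)) • piOfReal n (m fun j => Pi.single (i j) 1)) Finset.univ
    (n := fun _ => (∏ j, ‖v j‖) * ‖m‖) fun i _ => ?_).trans_eq ?_
  · rw [norm_smul, norm_prod, norm_piOfReal]
    gcongr with j
    · exact norm_le_pi_norm (v j) (i j)
    · have h1 : ∀ a : Fin n, ‖(Pi.single a 1 : Fin n → ℝ)‖ = 1 := fun a => by
        rw [Pi.norm_single, norm_one]
      simpa [h1] using m.le_opNorm fun j => Pi.single (i j) 1
  · simp
    ring

lemma AnalyticAt.exists_complexification {f : (Fin n → ℝ) → (Fin n → ℝ)}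
    (hf : AnalyticAt ℝ f 0) : ∃ F : (Fin n → ℂ) → (Fin n → ℂ), AnalyticAt ℂ F 0 ∧
      ∀ᶠ x in 𝓝 0, F (piOfReal n x) = piOfReal n (f x) := by
  obtain ⟨p, r, hp⟩ := hf
  let q : FormalMultilinearSeries ℂ (Fin n → ℂ) (Fin n → ℂ) := fun k => (p k).complexify
  obtain ⟨s, hs0, hs⟩ := ENNReal.lt_iff_exists_nnreal_btwn.1 (hp.r_pos.trans_le hp.r_le)
  have hs0 : 0 < s := by simpa using hs0
  obtain ⟨C, hC0, hC⟩ := p.norm_mul_pow_le_of_lt_radius hs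
  have hq : (s / (n + 1) : ℝ≥0) ≤ q.radius := by
    refine q.le_radius_of_bound C fun k => ?_
    calc ‖q k‖ * ((s / (n + 1) : ℝ≥0) : ℝ) ^ k
        ≤ ((n : ℝ) ^ k * ‖p k‖) * ((s : ℝ) / (n + 1)) ^ k := by
          gcongr
          · exact (p k).norm_complexify_le
          · simp
      _ = (n / (n + 1) : ℝ) ^ k * (‖p k‖ * (s : ℝ) ^ k) := by
          rw [div_pow, div_pow]; ring
      _ ≤ 1 * C := by
          gcongr
          · refine pow_le_one₀ (by positivity) ?_
            rw [div_le_one (by positivity)]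
            linarith
          · exact hC k
      _ = C := one_mul C
  have hq0 : 0 < q.radius := lt_of_lt_of_le (by simpa using by positivity) hq
  have hF := q.hasFPowerSeriesOnBall hq0
  refine ⟨q.sum, hF.analyticAt, ?_⟩
  filter_upwards [Metric.eball_mem_nhds (0 : Fin n → ℝ) hp.r_pos,
    tendsto_piOfReal (Metric.eball_mem_nhds (0 : Fin n → ℂ) hq0)] with x hx hx'
  have h1 := hF.hasSum hx'
  have h2 := (piOfReal n).hasSum (hp.hasSum hx)
  rw [zero_add] at h1 h2
  refine h1.unique (h2.congr_fun fun k => ?_)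
  exact ((p k).complexify_piOfReal fun _ => x)

lemma hasFDerivAt_piRe_comp {F : (Fin n → ℂ) → (Fin n → ℂ)} {x : Fin n → ℝ}
    (hF : DifferentiableAt ℂ F (piOfReal n x)) :
    HasFDerivAt (fun x => piRe n (F (piOfReal n x)))
      (piRe n ∘L (fderiv ℂ F (piOfReal n x)).restrictScalars ℝ ∘L piOfReal n) x :=
  (piRe n).hasFDerivAt.comp x
    ((hF.hasFDerivAt.restrictScalars ℝ).comp x (piOfReal n).hasFDerivAt)

lemma AnalyticAt.piRe_comp {F : (Fin n → ℂ) → (Fin n → ℂ)} {x : Fin n → ℝ}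
    (hF : AnalyticAt ℂ F (piOfReal n x)) : AnalyticAt ℝ (fun x => piRe n (F (piOfReal n x))) x :=
  ((piRe n).analyticAt _).comp (hF.restrictScalars.comp ((piOfReal n).analyticAt x))

lemma fderiv_piOfReal {F : (Fin n → ℂ) → (Fin n → ℂ)} {f : (Fin n → ℝ) → (Fin n → ℝ)}
    {x : Fin n → ℝ} (hF : DifferentiableAt ℂ F (piOfReal n x)) (hf : DifferentiableAt ℝ f x)
    (h : ∀ᶠ y in 𝓝 x, F (piOfReal n y) = piOfReal n (f y)) (v : Fin n → ℝ) :
    fderiv ℂ F (piOfReal n x) (piOfReal n v) = piOfReal n (fderiv ℝ f x v) := by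
  have h1 : HasFDerivAt (fun y => F (piOfReal n y)) _ x :=
    (hF.hasFDerivAt.restrictScalars ℝ).comp x (piOfReal n).hasFDerivAt
  have h2 : HasFDerivAt (fun y => piOfReal n (f y)) _ x :=
    (piOfReal n).hasFDerivAt.comp x hf.hasFDerivAt
  have h3 := h1.unique (h2.congr_of_eventuallyEq h)
  exact congrArg (fun T : (Fin n → ℝ) →L[ℝ] (Fin n → ℂ) => T v) h3

end Complexification

section Endomorphism

open Polynomial

variable {n : ℕ}

/-- The `ℂ`-linear extension of an endomorphism of `ℝⁿ`. -/
noncomputable def complexifyEnd (n : ℕ) :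
    Module.End ℝ (Fin n → ℝ) →ₐ[ℝ] Module.End ℂ (Fin n → ℂ) :=
  ((Matrix.toLinAlgEquiv' (R := ℂ) (n := Fin n)).toAlgHom.restrictScalars ℝ).comp
    ((Algebra.ofId ℝ ℂ).mapMatrix.comp LinearMap.toMatrixAlgEquiv'.toAlgHom)

lemma complexifyEnd_piOfReal (T : Module.End ℝ (Fin n → ℝ)) (x : Fin n → ℝ) :
    complexifyEnd n T (piOfReal n x) = piOfReal n (T x) := by
  ext i
  rw [piOfReal_apply, ← LinearMap.toMatrix'_mulVec T x]
  simp [complexifyEnd, Matrix.mulVec, dotProduct]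

lemma complexifyEnd_injective : Function.Injective (complexifyEnd n) := by
  intro T T' h
  refine LinearMap.ext fun x => ?_
  have := congrArg (fun f : Module.End ℂ (Fin n → ℂ) => piRe n (f (piOfReal n x))) h
  simpa [complexifyEnd_piOfReal] using this

lemma Module.End.IsSemisimple.map_ringHom {K K' V W : Type*} [Field K] [PerfectField K] [Field K']
    [AddCommGroup V] [Module K V] [FiniteDimensional K V] [AddCommGroup W] [Module K' W]
    {T : Module.End K V} (hT : T.IsSemisimple) (σ : K →+* K')
    (f : Module.End K V →+* Module.End K' W)
    (hf : f.comp (algebraMap K (Module.End K V)) = (algebraMap K' (Module.End K' W)).comp σ) :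
    (f T).IsSemisimple := by
  have hsep : (minpoly K T).Separable :=
    PerfectField.separable_iff_squarefree.2 hT.minpoly_squarefree
  refine Module.End.isSemisimple_of_squarefree_aeval_eq_zero
    (p := (minpoly K T).map σ) hsep.map.squarefree ?_
  rw [aeval_def, eval₂_map, ← hf, ← hom_eval₂, ← aeval_def, minpoly.aeval, map_zero]

lemma Module.End.IsSemisimple.complexifyEnd {T : Module.End ℝ (Fin n → ℝ)}
    (hT : T.IsSemisimple) : (complexifyEnd n T).IsSemisimple :=
  hT.map_ringHom (algebraMap ℝ ℂ) (_root_.complexifyEnd n).toRingHom <|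
    RingHom.ext fun r => ((_root_.complexifyEnd n).commutes r).trans
      (IsScalarTower.algebraMap_apply ℝ ℂ (Module.End ℂ (Fin n → ℂ)) r)

lemma Module.End.IsSemisimple.of_complexifyEnd {T : Module.End ℝ (Fin n → ℝ)}
    (hT : (_root_.complexifyEnd n T).IsSemisimple) : T.IsSemisimple := by
  obtain ⟨m, hm, s, hs, hmn, hss, hT'⟩ := T.exists_isNilpotent_isSemisimple
  have hc : Commute m s :=
    Algebra.commute_of_mem_adjoin_singleton_of_commute hs
      (Algebra.commute_of_mem_adjoin_self hm).symm
  have := Module.End.isNilpotent_isSemisimple_unique (hmn.map (_root_.complexifyEnd n))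
    hss.complexifyEnd IsNilpotent.zero hT (hc.map (_root_.complexifyEnd n)) (Commute.zero_left _)
    (by rw [← map_add, ← hT', zero_add])
  have hm0 : m = 0 := complexifyEnd_injective (this.1.trans (map_zero _).symm)
  rwa [hT', hm0, zero_add]

lemma IsNilpotent.of_complexifyEnd {T : Module.End ℝ (Fin n → ℝ)}
    (hT : IsNilpotent (complexifyEnd n T)) : IsNilpotent T :=
  (IsNilpotent.map_iff complexifyEnd_injective).1 hT

/-- Complex conjugation of endomorphisms of `ℂⁿ`. -/
def starConjEnd (n : ℕ) : Module.End ℂ (Fin n → ℂ) →+* Module.End ℂ (Fin n → ℂ) where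
  toFun T :=
    { toFun v := star (T (star v))
      map_add' v w := by simp
      map_smul' c v := by simp [star_smul] }
  map_one' := LinearMap.ext fun v => by simp
  map_zero' := LinearMap.ext fun v => by simp
  map_mul' T T' := LinearMap.ext fun v => by simp
  map_add' T T' := LinearMap.ext fun v => by simp

lemma starConjEnd_apply (T : Module.End ℂ (Fin n → ℂ)) (v : Fin n → ℂ) :
    starConjEnd n T v = star (T (star v)) := rfl

lemma Module.End.IsSemisimple.starConjEnd {T : Module.End ℂ (Fin n → ℂ)}
    (hT : T.IsSemisimple) : (starConjEnd n T).IsSemisimple :=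
  hT.map_ringHom (starRingEnd ℂ) (_root_.starConjEnd n) <| RingHom.ext fun c =>
    LinearMap.ext fun v => by simp [starConjEnd_apply, star_smul]

end Endomorphism

section NormalForm

open Topology Filter VectorField

lemma AnalyticAt.lieBracket {𝕜 E : Type*} [RCLike 𝕜] [NormedAddCommGroup E] [NormedSpace 𝕜 E]
    [CompleteSpace E] {V W : E → E} {x : E} (hV : AnalyticAt 𝕜 V x) (hW : AnalyticAt 𝕜 W x) :
    AnalyticAt 𝕜 (lieBracket 𝕜 V W) x :=
  (hW.fderiv.clm_apply hV).sub (hV.fderiv.clm_apply hW)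

/-- The map `φ` conjugates the germ at `0` of `X` to the germ of `Y`, which is in Poincaré–Dulac
normal form with linear part `S + N`. -/
structure IsPDNormalization (𝕜 : Type*) [NontriviallyNormedField 𝕜] {n : ℕ}
    (X Y φ : (Fin n → 𝕜) → (Fin n → 𝕜)) (S N : (Fin n → 𝕜) →L[𝕜] (Fin n → 𝕜)) : Prop where
  analyticAt : AnalyticAt 𝕜 Y 0
  analyticAt_map : AnalyticAt 𝕜 φ 0
  apply_zero : Y 0 = 0
  map_zero : φ 0 = 0
  bijective : Function.Bijective (fderiv 𝕜 φ 0)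
  fderiv_eq : fderiv 𝕜 Y 0 = S + N
  isSemisimple : Module.End.IsSemisimple (S : Module.End 𝕜 (Fin n → 𝕜))
  isNilpotent : IsNilpotent (N : Module.End 𝕜 (Fin n → 𝕜))
  comm : S ∘L N = N ∘L S
  lieBracket_eq_zero : ∀ᶠ x in 𝓝 0, lieBracket 𝕜 Y (fun y => S y) x = 0
  conj : ∀ᶠ x in 𝓝 0, fderiv 𝕜 φ x (Y x) = X (φ x)

lemma admitsPDNormalization_iff {𝕜 : Type*} [RCLike 𝕜] {n : ℕ}
    {X : (Fin n → 𝕜) → (Fin n → 𝕜)} :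
    AdmitsPDNormalization 𝕜 X ↔ ∃ Y φ S N, IsPDNormalization 𝕜 X Y φ S N := by
  constructor
  · rintro ⟨V, Y, φ, hV, h0, hY, hφ, hY0, hφ0, hb, ⟨S, N, hA, hS, hN, hSN, hYS⟩, h⟩
    have hV0 := hV.mem_nhds h0
    exact ⟨Y, φ, S, N, hY 0 h0, hφ 0 h0, hY0, hφ0, hb, hA, hS, hN, hSN,
      mem_of_superset hV0 hYS, mem_of_superset hV0 h⟩
  · rintro ⟨Y, φ, S, N, hY, hφ, hY0, hφ0, hb, hA, hS, hN, hSN, hYS, h⟩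
    obtain ⟨V, hV, hVo, h0⟩ := eventually_nhds_iff.1
      (hY.eventually_analyticAt.and (hφ.eventually_analyticAt.and (hYS.and h)))
    exact ⟨V, Y, φ, hVo, h0, fun x hx => (hV x hx).1, fun x hx => (hV x hx).2.1, hY0, hφ0, hb,
      ⟨S, N, hA, hS, hN, hSN, fun x hx => (hV x hx).2.2.1⟩, fun x hx => (hV x hx).2.2.2⟩

/-- A vector field commuting with a vector field which is linearizable to the semisimple part of its
linearization admits a convergent normalization. -/
lemma admitsPDNormalization_of_linearizable {𝕜 : Type*} [RCLike 𝕜] {n : ℕ}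
    {X Z ψ : (Fin n → 𝕜) → (Fin n → 𝕜)} {B N : (Fin n → 𝕜) →L[𝕜] (Fin n → 𝕜)}
    (hX : AnalyticAt 𝕜 X 0) (hZ : AnalyticAt 𝕜 Z 0) (hψ : AnalyticAt 𝕜 ψ 0) (hX0 : X 0 = 0)
    (hψ0 : ψ 0 = 0) (hψ1 : fderiv 𝕜 ψ 0 = ContinuousLinearMap.id 𝕜 (Fin n → 𝕜))
    (hA : fderiv 𝕜 X 0 = B + N) (hB : Module.End.IsSemisimple (B : Module.End 𝕜 (Fin n → 𝕜)))
    (hN : IsNilpotent (N : Module.End 𝕜 (Fin n → 𝕜))) (hBN : B ∘L N = N ∘L B)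
    (hXZ : ∀ᶠ x in 𝓝 0, lieBracket 𝕜 X Z x = 0)
    (hZB : ∀ᶠ x in 𝓝 0, fderiv 𝕜 ψ x (Z x) = B (ψ x)) : AdmitsPDNormalization 𝕜 X := by
  obtain ⟨φ, hφ, hφ0, hψφ, hφψ⟩ := hψ.exists_local_inverse hψ0
    (by rw [hψ1]; exact Function.bijective_id)
  have hφt : Tendsto φ (𝓝 0) (𝓝 0) := by simpa [hφ0] using hφ.continuousAt.tendsto
  have hψt : Tendsto ψ (𝓝 0) (𝓝 0) := by simpa [hψ0] using hψ.continuousAt.tendsto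
  have hφ1 : ∀ v, fderiv 𝕜 φ 0 v = v := fun v => by
    have := fderiv_comp_fderiv_of_eventually_eq_id (φ := ψ) (ψ := φ) (x := 0)
      (by rw [hφ0]; exact hψ.differentiableAt) hφ.differentiableAt hψφ v
    rwa [hφ0, hψ1] at this
  have hψ' : AnalyticAt 𝕜 (fun y => fderiv 𝕜 ψ (φ y)) 0 :=
    AnalyticAt.comp (g := fderiv 𝕜 ψ) (by rw [hφ0]; exact hψ.fderiv) hφ
  have hX' : AnalyticAt 𝕜 (fun y => X (φ y)) 0 :=
    AnalyticAt.comp (g := X) (by rwa [hφ0]) hφ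
  set Y : (Fin n → 𝕜) → (Fin n → 𝕜) := fun y => fderiv 𝕜 ψ (φ y) (X (φ y)) with hYdef
  have hY : AnalyticAt 𝕜 Y 0 := hψ'.clm_apply hX'
  refine admitsPDNormalization_iff.2 ⟨Y, φ, B, N, hY, hφ, by simp [Y, hφ0, hX0], hφ0, ?_, ?_, hB,
    hN, hBN, ?_, ?_⟩
  · convert Function.bijective_id
    exact funext hφ1
  · ext1 v
    have h1 := hψ'.differentiableAt.hasFDerivAt.clm_apply hX'.differentiableAt.hasFDerivAt
    rw [h1.fderiv, fderiv_fun_comp 0 (by rw [hφ0]; exact hX.differentiableAt)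
      hφ.differentiableAt]
    simp [hφ0, hX0, hψ1, hφ1, hA]
  · have hXY : ∀ᶠ x in 𝓝 0, fderiv 𝕜 ψ x (X x) = Y (ψ x) := by
      filter_upwards [hφψ] with x hx
      simp only [Y, hx]
    filter_upwards [hψφ, hφt.eventually hψ.eventually_analyticAt,
      hφt.eventually hX.eventually_analyticAt, hφt.eventually hZ.eventually_analyticAt,
      hY.eventually_analyticAt, hφt.eventually hXZ, hφt.eventually hXY.eventually_nhds,
      hφt.eventually hZB.eventually_nhds] with y hy hψy hXy hZy hYy h0 h1 h2
    have := (hψy.contDiffAt (n := 2)).fderiv_apply_lieBracket_of_related hXy.differentiableAt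
      hZy.differentiableAt (hy.symm ▸ hYy.differentiableAt) B.differentiableAt h1 h2
    rw [h0, map_zero, hy] at this
    exact this.symm
  · filter_upwards [hψφ, hφ.eventually_analyticAt, hφt.eventually hψ.eventually_analyticAt,
      hφt.eventually hφψ.eventually_nhds] with y hy hφy hψy h1
    have := fderiv_comp_fderiv_of_eventually_eq_id (𝕜 := 𝕜) (φ := φ) (ψ := ψ) (x := φ y)
      (hy.symm ▸ hφy.differentiableAt) hψy.differentiableAt h1 (X (φ y))
    rwa [hy] at this

variable {n : ℕ}

lemma lieBracket_piOfReal {F G : (Fin n → ℂ) → (Fin n → ℂ)} {f g : (Fin n → ℝ) → (Fin n → ℝ)}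
    {x : Fin n → ℝ} (hF : DifferentiableAt ℂ F (piOfReal n x)) (hf : DifferentiableAt ℝ f x)
    (hG : DifferentiableAt ℂ G (piOfReal n x)) (hg : DifferentiableAt ℝ g x)
    (hFf : ∀ᶠ y in 𝓝 x, F (piOfReal n y) = piOfReal n (f y))
    (hGg : ∀ᶠ y in 𝓝 x, G (piOfReal n y) = piOfReal n (g y)) :
    lieBracket ℂ F G (piOfReal n x) = piOfReal n (lieBracket ℝ f g x) := by
  simp only [lieBracket_eq]
  rw [hFf.self_of_nhds, hGg.self_of_nhds,
    fderiv_piOfReal hF hf hFf, fderiv_piOfReal hG hg hGg, map_sub]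

lemma fderiv_zero_piOfReal {F : (Fin n → ℂ) → (Fin n → ℂ)} {f : (Fin n → ℝ) → (Fin n → ℝ)}
    (hF : AnalyticAt ℂ F 0) (hf : AnalyticAt ℝ f 0)
    (h : ∀ᶠ y in 𝓝 0, F (piOfReal n y) = piOfReal n (f y)) (v : Fin n → ℝ) :
    fderiv ℂ F 0 (piOfReal n v) = piOfReal n (fderiv ℝ f 0 v) := by
  have := fderiv_piOfReal (x := 0) (by simpa using hF.differentiableAt) hf.differentiableAt h v
  rwa [map_zero] at this

/-- A normalization of a real vector field complexifies. -/
theorem AdmitsPDNormalization.complexify {X : (Fin n → ℂ) → (Fin n → ℂ)}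
    {Xr : (Fin n → ℝ) → (Fin n → ℝ)} (hX : AnalyticAt ℂ X 0)
    (hr : ∀ᶠ x in 𝓝 0, X (piOfReal n x) = piOfReal n (Xr x)) (h : AdmitsPDNormalization ℝ Xr) :
    AdmitsPDNormalization ℂ X := by
  obtain ⟨Y, φ, S, N, hY, hφ, hY0, hφ0, hb, hA, hS, hN, hSN, hYS, hYX⟩ :=
    admitsPDNormalization_iff.1 h
  obtain ⟨Yc, hYc, hYcr⟩ := hY.exists_complexification
  obtain ⟨φc, hφc, hφcr⟩ := hφ.exists_complexification
  have hφc0 : φc 0 = 0 := by simpa [hφ0] using hφcr.self_of_nhds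
  have hφt : Tendsto φ (𝓝 0) (𝓝 0) := by simpa [hφ0] using hφ.continuousAt.tendsto
  let c (T : (Fin n → ℝ) →L[ℝ] (Fin n → ℝ)) : (Fin n → ℂ) →L[ℂ] (Fin n → ℂ) :=
    LinearMap.toContinuousLinearMap (complexifyEnd n T)
  have hc : ∀ T x, c T (piOfReal n x) = piOfReal n (T x) := fun T x =>
    complexifyEnd_piOfReal (T : Module.End ℝ (Fin n → ℝ)) x
  refine admitsPDNormalization_iff.2 ⟨Yc, φc, c S, c N, hYc, hφc, ?_, hφc0, ?_, ?_,
    hS.complexifyEnd, hN.map (complexifyEnd n), ?_, ?_, ?_⟩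
  · simpa [hY0] using hYcr.self_of_nhds
  · have h1 : fderiv ℂ φc 0 = c (fderiv ℝ φ 0) := ContinuousLinearMap.ext_piOfReal fun x => by
      rw [hc, fderiv_zero_piOfReal hφc hφ hφcr]
    rw [h1]
    exact (Module.End.isUnit_iff _).1 (((Module.End.isUnit_iff _).2 hb).map (complexifyEnd n))
  · refine ContinuousLinearMap.ext_piOfReal fun x => ?_
    rw [fderiv_zero_piOfReal hYc hY hYcr, hA]
    simp [hc]
  · refine ContinuousLinearMap.ext_piOfReal fun x => ?_
    have := congrArg (fun T : (Fin n → ℝ) →L[ℝ] (Fin n → ℝ) => T x) hSN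
    simpa [hc] using congrArg (piOfReal n) this
  · refine (hYc.lieBracket ((c S).analyticAt 0)).eventually_eq_zero_of_piOfReal ?_
    filter_upwards [hYS, hYcr.eventually_nhds, hY.eventually_analyticAt,
      tendsto_piOfReal.eventually hYc.eventually_analyticAt] with x h0 h1 h2 h3
    rw [lieBracket_piOfReal h3.differentiableAt h2.differentiableAt (c S).differentiableAt
      S.differentiableAt h1 (Eventually.of_forall (hc S)), h0, map_zero]
  · have han : AnalyticAt ℂ (fun z => fderiv ℂ φc z (Yc z) - X (φc z)) 0 :=
      (hφc.fderiv.clm_apply hYc).sub (AnalyticAt.comp (g := X) (by rwa [hφc0]) hφc)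
    refine (han.eventually_eq_zero_of_piOfReal ?_).mono fun z hz => sub_eq_zero.1 hz
    filter_upwards [hYX, hYcr, hφcr.eventually_nhds, hφ.eventually_analyticAt,
      tendsto_piOfReal.eventually hφc.eventually_analyticAt, hφt.eventually hr]
      with x h0 h1 h2 h3 h4 h5
    rw [h1, h2.self_of_nhds, h5, fderiv_piOfReal h4.differentiableAt h3.differentiableAt h2, h0,
      sub_self]

end NormalForm

section Descent

open Topology Filter VectorField

variable {n : ℕ}

/-- The semisimple parts of two normal forms of `X` come from the same vector field germ. -/
lemma IsPDNormalization.fderiv_semisimple_unique {X Y Y' φ φ' ψ ψ' : (Fin n → ℂ) → (Fin n → ℂ)}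
    {S N S' N' : (Fin n → ℂ) →L[ℂ] (Fin n → ℂ)} (h : IsPDNormalization ℂ X Y φ S N)
    (h' : IsPDNormalization ℂ X Y' φ' S' N') (hψ : AnalyticAt ℂ ψ 0) (hψ0 : ψ 0 = 0)
    (hφψ : ∀ᶠ x in 𝓝 0, φ (ψ x) = x) (hψ' : AnalyticAt ℂ ψ' 0) (hψ0' : ψ' 0 = 0)
    (hφψ' : ∀ᶠ x in 𝓝 0, φ' (ψ' x) = x) (hψφ' : ∀ᶠ x in 𝓝 0, ψ' (φ' x) = x) :
    ∀ᶠ x in 𝓝 0, fderiv ℂ φ (ψ x) (S (ψ x)) = fderiv ℂ φ' (ψ' x) (S' (ψ' x)) := by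
  have hφt : Tendsto φ (𝓝 0) (𝓝 0) := by
    simpa [h.map_zero] using h.analyticAt_map.continuousAt.tendsto
  have hψt : Tendsto ψ (𝓝 0) (𝓝 0) := by simpa [hψ0] using hψ.continuousAt.tendsto
  have hψt' : Tendsto ψ' (𝓝 0) (𝓝 0) := by simpa [hψ0'] using hψ'.continuousAt.tendsto
  have hX : ∀ᶠ x in 𝓝 0, fderiv ℂ ψ' x (X x) = Y' (ψ' x) := by
    filter_upwards [hφψ', hψ'.eventually_analyticAt, hψt'.eventually h'.conj,
      hψt'.eventually h'.analyticAt_map.eventually_analyticAt,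
      hψt'.eventually hψφ'.eventually_nhds] with x hx h1 h2 h3 h4
    have := fderiv_comp_fderiv_of_eventually_eq_id (𝕜 := ℂ) (φ := ψ') (ψ := φ') (x := ψ' x)
      (by rw [hx]; exact h1.differentiableAt) h3.differentiableAt h4 (Y' (ψ' x))
    rwa [h2, hx] at this
  have hχ : AnalyticAt ℂ (fun y => ψ' (φ y)) 0 :=
    AnalyticAt.comp (g := ψ') (by rwa [h.map_zero]) h.analyticAt_map
  have hdχ : ∀ᶠ y in 𝓝 0, ∀ v, fderiv ℂ (fun y => ψ' (φ y)) y v =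
      fderiv ℂ ψ' (φ y) (fderiv ℂ φ y v) := by
    filter_upwards [hφt.eventually hψ'.eventually_analyticAt,
      h.analyticAt_map.eventually_analyticAt] with y h1 h2 v
    rw [fderiv_fun_comp y h1.differentiableAt h2.differentiableAt]
    rfl
  have key := eventually_fderiv_apply_semisimple h.isSemisimple h.isNilpotent h.comm
    h'.isSemisimple h'.isNilpotent h'.comm hχ h.analyticAt h'.analyticAt
    (by simp [h.map_zero, hψ0']) h.apply_zero h.fderiv_eq h'.fderiv_eq h.lieBracket_eq_zero
    h'.lieBracket_eq_zero (by
      filter_upwards [hdχ, h.conj, hφt.eventually hX] with y h1 h2 h3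
      rw [h1, h2, h3])
  filter_upwards [hφψ, hψt.eventually hdχ, hψt.eventually key, hψ'.eventually_analyticAt,
    hψt'.eventually h'.analyticAt_map.eventually_analyticAt, hφψ'.eventually_nhds]
    with x hx h1 h2 h3 h4 h5
  rw [h1, hx] at h2
  rw [← h2, fderiv_comp_fderiv_of_eventually_eq_id h4.differentiableAt h3.differentiableAt h5]

lemma tendsto_star_zero : Tendsto (star : (Fin n → ℂ) → (Fin n → ℂ)) (𝓝 0) (𝓝 0) := by
  simpa using (continuous_star (R := Fin n → ℂ)).tendsto 0

lemma AnalyticAt.eventually_star_apply_star {X : (Fin n → ℂ) → (Fin n → ℂ)}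
    {Xr : (Fin n → ℝ) → (Fin n → ℝ)} (hX : AnalyticAt ℂ X 0)
    (hr : ∀ᶠ x in 𝓝 0, X (piOfReal n x) = piOfReal n (Xr x)) :
    ∀ᶠ z in 𝓝 0, star (X (star z)) = X z := by
  have h1 : AnalyticAt ℂ (star ∘ X ∘ star) 0 := AnalyticAt.star_star (by simpa using hX)
  refine ((h1.sub hX).eventually_eq_zero_of_piOfReal ?_).mono fun z hz => sub_eq_zero.1 hz
  filter_upwards [hr] with x hx
  simp [hx]

lemma lieBracket_star_star {F G : (Fin n → ℂ) → (Fin n → ℂ)} {x : Fin n → ℂ}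
    (hF : DifferentiableAt ℂ F (star x)) (hG : DifferentiableAt ℂ G (star x)) :
    lieBracket ℂ (star ∘ F ∘ star) (star ∘ G ∘ star) x = star (lieBracket ℂ F G (star x)) := by
  simp only [lieBracket_eq]
  rw [fderiv_star_star _ hF, fderiv_star_star _ hG]
  simp

/-- A vector field commuting with complex conjugation has its normalizations permuted by it. -/
lemma IsPDNormalization.star_star {X Y φ : (Fin n → ℂ) → (Fin n → ℂ)}
    {S N : (Fin n → ℂ) →L[ℂ] (Fin n → ℂ)} (h : IsPDNormalization ℂ X Y φ S N)
    (hX : ∀ᶠ z in 𝓝 0, star (X (star z)) = X z) :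
    IsPDNormalization ℂ X (star ∘ Y ∘ star) (star ∘ φ ∘ star)
      (LinearMap.toContinuousLinearMap (starConjEnd n S))
      (LinearMap.toContinuousLinearMap (starConjEnd n N)) where
  analyticAt := AnalyticAt.star_star (by simpa using h.analyticAt)
  analyticAt_map := AnalyticAt.star_star (by simpa using h.analyticAt_map)
  apply_zero := by simp [h.apply_zero]
  map_zero := by simp [h.map_zero]
  bijective := by
    have : ⇑(fderiv ℂ (star ∘ φ ∘ star) 0) = star ∘ fderiv ℂ φ 0 ∘ star := funext fun v => by
      rw [fderiv_star_star _ (by simpa using h.analyticAt_map.differentiableAt), star_zero]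
      rfl
    rw [this]
    exact star_involutive.bijective.comp (h.bijective.comp star_involutive.bijective)
  fderiv_eq := by
    refine ContinuousLinearMap.ext fun v => ?_
    rw [fderiv_star_star _ (by simpa using h.analyticAt.differentiableAt), star_zero, h.fderiv_eq]
    simp [starConjEnd_apply]
  isSemisimple := h.isSemisimple.starConjEnd
  isNilpotent := h.isNilpotent.map (starConjEnd n)
  comm := by
    refine ContinuousLinearMap.ext fun v => ?_
    have := congrArg (fun T : (Fin n → ℂ) →L[ℂ] (Fin n → ℂ) => star (T (star v))) h.comm
    simpa [starConjEnd_apply] using this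
  lieBracket_eq_zero := by
    filter_upwards [tendsto_star_zero.eventually h.lieBracket_eq_zero,
      tendsto_star_zero.eventually h.analyticAt.eventually_analyticAt] with x h0 h1
    have := lieBracket_star_star h1.differentiableAt (S.differentiableAt (x := star x))
    rw [h0, star_zero] at this
    exact this
  conj := by
    have hφt : Tendsto (star ∘ φ ∘ star) (𝓝 0) (𝓝 0) := by
      have : Tendsto φ (𝓝 0) (𝓝 0) := by
        simpa [h.map_zero] using h.analyticAt_map.continuousAt.tendsto
      exact tendsto_star_zero.comp (this.comp tendsto_star_zero)
    filter_upwards [tendsto_star_zero.eventually h.conj,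
      tendsto_star_zero.eventually h.analyticAt_map.eventually_analyticAt,
      hφt.eventually hX] with x h1 h2 h3
    rw [fderiv_star_star _ h2.differentiableAt, ← h3]
    simp [h1]

lemma piRe_apply_of_piOfReal {T : (Fin n → ℂ) →L[ℂ] (Fin n → ℂ)}
    {Tr : (Fin n → ℝ) →L[ℝ] (Fin n → ℝ)} (h : ∀ x, T (piOfReal n x) = piOfReal n (Tr x))
    (z : Fin n → ℂ) : piRe n (T z) = Tr (piRe n z) := by
  conv_lhs => rw [eq_piOfReal_add z, map_add, map_smul, h, h]
  ext j
  simp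

lemma complexifyEnd_eq_of_piOfReal {T : (Fin n → ℂ) →L[ℂ] (Fin n → ℂ)}
    {Tr : (Fin n → ℝ) →L[ℝ] (Fin n → ℝ)} (h : ∀ x, T (piOfReal n x) = piOfReal n (Tr x)) :
    complexifyEnd n Tr = (T : Module.End ℂ (Fin n → ℂ)) := by
  have : LinearMap.toContinuousLinearMap (complexifyEnd n Tr) = T :=
    ContinuousLinearMap.ext_piOfReal fun x => by
      rw [h]; exact complexifyEnd_piOfReal (Tr : Module.End ℝ (Fin n → ℝ)) x
  rw [← this]
  rfl

/-- A holomorphic vector field which is real on real points and normalizable over `ℂ` is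
normalizable over `ℝ`. -/
theorem AdmitsPDNormalization.descend {X : (Fin n → ℂ) → (Fin n → ℂ)}
    {Xr : (Fin n → ℝ) → (Fin n → ℝ)} (hX : AnalyticAt ℂ X 0) (hXr : AnalyticAt ℝ Xr 0)
    (hXr0 : Xr 0 = 0) (hr : ∀ᶠ x in 𝓝 0, X (piOfReal n x) = piOfReal n (Xr x))
    (h : AdmitsPDNormalization ℂ X) : AdmitsPDNormalization ℝ Xr := by
  obtain ⟨Y, φ, S, N, h⟩ := admitsPDNormalization_iff.1 h
  have hφ := h.analyticAt_map
  obtain ⟨ψ, hψ, hψ0, hφψ, hψφ⟩ := hφ.exists_local_inverse h.map_zero h.bijective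
  have hψt : Tendsto ψ (𝓝 0) (𝓝 0) := by simpa [hψ0] using hψ.continuousAt.tendsto
  set Z : (Fin n → ℂ) → (Fin n → ℂ) := fun x => fderiv ℂ φ (ψ x) (S (ψ x)) with hZdef
  have hφ' : AnalyticAt ℂ (fun x => fderiv ℂ φ (ψ x)) 0 :=
    AnalyticAt.comp (g := fderiv ℂ φ) (by rw [hψ0]; exact hφ.fderiv) hψ
  have hSψ : AnalyticAt ℂ (fun x => S (ψ x)) 0 := (S.analyticAt _).comp hψ
  have hZ : AnalyticAt ℂ Z 0 := hφ'.clm_apply hSψ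
  -- the vector field `Z` commutes with complex conjugation
  have hZstar : ∀ᶠ x in 𝓝 0, star (Z (star x)) = Z x := by
    have hψs : AnalyticAt ℂ (star ∘ ψ ∘ star) 0 := AnalyticAt.star_star (by simpa using hψ)
    have h1 := h.fderiv_semisimple_unique (h.star_star (hX.eventually_star_apply_star hr)) hψ hψ0
      hφψ hψs (by simp [hψ0])
      ((tendsto_star_zero.eventually hφψ).mono fun x hx => by simp [hx])
      ((tendsto_star_zero.eventually hψφ).mono fun x hx => by simp [hx])
    filter_upwards [h1, (hψt.comp tendsto_star_zero).eventually hφ.eventually_analyticAt]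
      with x hx h2
    rw [fderiv_star_star _ (by simpa using h2.differentiableAt)] at hx
    simpa [Z, starConjEnd_apply] using hx.symm
  set Zr : (Fin n → ℝ) → (Fin n → ℝ) := fun x => piRe n (Z (piOfReal n x)) with hZrdef
  have hZr : AnalyticAt ℝ Zr 0 := AnalyticAt.piRe_comp (by simpa using hZ)
  have hZZr : ∀ᶠ x in 𝓝 0, Z (piOfReal n x) = piOfReal n (Zr x) := by
    filter_upwards [tendsto_piOfReal.eventually hZstar] with x hx
    rw [star_piOfReal] at hx
    exact (piOfReal_piRe hx).symm
  -- the linear parts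
  set L := fderiv ℂ φ 0 with hL
  set M := fderiv ℂ ψ 0 with hM
  have hLM : ∀ v, L (M v) = v := fun v => by
    have := fderiv_comp_fderiv_of_eventually_eq_id (𝕜 := ℂ) (φ := φ) (ψ := ψ) (x := 0)
      (by rw [hψ0]; exact hφ.differentiableAt) hψ.differentiableAt hφψ v
    rwa [hψ0] at this
  have hML : ∀ v, M (L v) = v := fun v => h.bijective.1 (hLM _)
  set B := fderiv ℂ Z 0 with hBdef
  have hB : ∀ v, B v = L (S (M v)) := fun v => by
    have h1 := hφ'.differentiableAt.hasFDerivAt.clm_apply hSψ.differentiableAt.hasFDerivAt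
    rw [hBdef, h1.fderiv, fderiv_fun_comp 0 S.differentiableAt hψ.differentiableAt]
    simp [hψ0, hL, hM]
  have hXL : ∀ v, fderiv ℂ X 0 v = L (S (M v)) + L (N (M v)) := fun v => by
    have h1 := (hφ.fderiv.differentiableAt.hasFDerivAt.clm_apply
      h.analyticAt.differentiableAt.hasFDerivAt).fderiv
    have h2 : fderiv ℂ (fun x => X (φ x)) 0 = fderiv ℂ X 0 ∘L L := by
      rw [fderiv_fun_comp 0 (by rw [h.map_zero]; exact hX.differentiableAt) hφ.differentiableAt,
        h.map_zero]
    rw [EventuallyEq.fderiv_eq h.conj, h2] at h1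
    have h3 := congrArg (fun T : (Fin n → ℂ) →L[ℂ] (Fin n → ℂ) => T (M v)) h1
    simpa [hLM, h.apply_zero, h.fderiv_eq] using h3
  let e : (Fin n → ℂ) ≃ₗ[ℂ] (Fin n → ℂ) :=
    LinearEquiv.ofLinearMap (L : (Fin n → ℂ) →ₗ[ℂ] (Fin n → ℂ)) M (LinearMap.ext hLM)
      (LinearMap.ext hML)
  have hBe : (B : Module.End ℂ (Fin n → ℂ)) = e.conjAlgEquiv ℂ S := LinearMap.ext hB
  have hNe : ((fderiv ℂ X 0 - B : (Fin n → ℂ) →L[ℂ] (Fin n → ℂ)) : Module.End ℂ (Fin n → ℂ)) =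
      e.conjAlgEquiv ℂ N := LinearMap.ext fun v => by
    have : fderiv ℂ X 0 v - B v = L (N (M v)) := by rw [hXL, hB, add_sub_cancel_left]
    exact this
  set Br := fderiv ℝ Zr 0 with hBrdef
  have hBr : ∀ x, B (piOfReal n x) = piOfReal n (Br x) := fderiv_zero_piOfReal hZ hZr hZZr
  have hNr : ∀ x, (fderiv ℂ X 0 - B) (piOfReal n x) = piOfReal n ((fderiv ℝ Xr 0 - Br) x) :=
    fun x => by simp [hBr, fderiv_zero_piOfReal hX hXr hr]
  have hBc := complexifyEnd_eq_of_piOfReal hBr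
  have hNc := complexifyEnd_eq_of_piOfReal hNr
  -- the linearization of the real vector field
  have hLψ : AnalyticAt ℂ (fun z => L (ψ z)) 0 := (L.analyticAt _).comp hψ
  have hψr : AnalyticAt ℝ (fun x => piRe n (L (ψ (piOfReal n x)))) 0 :=
    AnalyticAt.piRe_comp (F := fun z => L (ψ z)) (by simpa using hLψ)
  have hdLψ : ∀ᶠ z in 𝓝 0, ∀ v, fderiv ℂ (fun z => L (ψ z)) z v = L (fderiv ℂ ψ z v) := by
    filter_upwards [hψ.eventually_analyticAt] with z hz v
    rw [fderiv_fun_comp z L.differentiableAt hz.differentiableAt]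
    simp
  have hdψr : ∀ᶠ x in 𝓝 0, ∀ v, fderiv ℝ (fun x => piRe n (L (ψ (piOfReal n x)))) x v =
      piRe n (L (fderiv ℂ ψ (piOfReal n x) (piOfReal n v))) := by
    filter_upwards [tendsto_piOfReal.eventually hLψ.eventually_analyticAt,
      tendsto_piOfReal.eventually hdLψ] with x h1 h2 v
    rw [(hasFDerivAt_piRe_comp h1.differentiableAt).fderiv, ← h2]
    rfl
  refine admitsPDNormalization_of_linearizable (B := Br) (N := fderiv ℝ Xr 0 - Br) hXr hZr hψr
    hXr0 (by simp [hψ0]) ?_ (by simp) ?_ ?_ ?_ ?_ ?_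
  · refine ContinuousLinearMap.ext fun v => ?_
    rw [hdψr.self_of_nhds, map_zero, ← hM, hLM]
    simp
  · refine Module.End.IsSemisimple.of_complexifyEnd ?_
    rw [hBc, hBe]
    exact h.isSemisimple.map_ringHom (RingHom.id ℂ) (e.conjAlgEquiv ℂ).toAlgHom.toRingHom
      (RingHom.ext fun r => (e.conjAlgEquiv ℂ).commutes r)
  · refine IsNilpotent.of_complexifyEnd ?_
    rw [hNc, hNe]
    exact h.isNilpotent.map (e.conjAlgEquiv ℂ)
  · have h1 : Commute (S : Module.End ℂ (Fin n → ℂ)) N :=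
      LinearMap.ext fun v => congrArg (fun T : (Fin n → ℂ) →L[ℂ] (Fin n → ℂ) => T v) h.comm
    have h2 := h1.map (e.conjAlgEquiv ℂ)
    rw [← hBe, ← hNe, ← hBc, ← hNc] at h2
    have h3 := h2.of_map (f := complexifyEnd n) complexifyEnd_injective
    exact ContinuousLinearMap.ext fun v => congrArg (fun T : Module.End ℝ (Fin n → ℝ) => T v) h3.eq
  · have hXZ : ∀ᶠ x in 𝓝 0, lieBracket ℂ X Z x = 0 := by
      have hφZ : ∀ᶠ y in 𝓝 0, fderiv ℂ φ y (S y) = Z (φ y) := by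
        filter_upwards [hψφ] with y hy
        simp only [Z, hy]
      filter_upwards [hφψ, hψt.eventually hφ.eventually_analyticAt,
        hψt.eventually h.analyticAt.eventually_analyticAt, hX.eventually_analyticAt,
        hZ.eventually_analyticAt, hψt.eventually h.conj.eventually_nhds,
        hψt.eventually hφZ.eventually_nhds, hψt.eventually h.lieBracket_eq_zero]
        with x hx h1 h2 h3 h4 h5 h6 h7
      have := (h1.contDiffAt (n := 2)).fderiv_apply_lieBracket_of_related h2.differentiableAt
        S.differentiableAt (by rw [hx]; exact h3.differentiableAt)
        (by rw [hx]; exact h4.differentiableAt) h5 h6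
      rw [h7, map_zero, hx] at this
      exact this.symm
    filter_upwards [tendsto_piOfReal.eventually hXZ, hXr.eventually_analyticAt,
      hZr.eventually_analyticAt, tendsto_piOfReal.eventually hX.eventually_analyticAt,
      tendsto_piOfReal.eventually hZ.eventually_analyticAt, hr.eventually_nhds,
      hZZr.eventually_nhds] with x h0 h1 h2 h3 h4 h5 h6
    rw [lieBracket_piOfReal h3.differentiableAt h1.differentiableAt h4.differentiableAt
      h2.differentiableAt h5 h6] at h0
    simpa using congrArg (piRe n) h0
  · have hψZ : ∀ᶠ x in 𝓝 0, fderiv ℂ ψ x (Z x) = S (ψ x) := by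
      filter_upwards [hφψ, hψ.eventually_analyticAt, hψt.eventually hφ.eventually_analyticAt,
        hψt.eventually hψφ.eventually_nhds] with x hx h1 h2 h3
      have := fderiv_comp_fderiv_of_eventually_eq_id (𝕜 := ℂ) (φ := ψ) (ψ := φ) (x := ψ x)
        (by rw [hx]; exact h1.differentiableAt) h2.differentiableAt h3 (S (ψ x))
      rwa [hx] at this
    filter_upwards [hdψr, hZZr, tendsto_piOfReal.eventually hψZ] with x h1 h2 h3
    rw [h1, ← h2, h3, ← piRe_apply_of_piOfReal hBr, hB, hML]

end Descent

/-- **Real versus complex Poincaré–Dulac normalization** (Zung). A real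
analytic vector field near `0 ∈ ℝⁿ` (presented as the restriction to real
points of a holomorphic vector field `X` near `0 ∈ ℂⁿ` preserving the real
subspace) admits a local real analytic Poincaré–Dulac normalization if and
only if `X` admits a local holomorphic Poincaré–Dulac normalization. -/
theorem real_iff_complex_PDNormalization
    (n : ℕ) (X : (Fin n → ℂ) → (Fin n → ℂ))
    (W : Set (Fin n → ℂ)) (hWopen : IsOpen W) (h0W : (0 : Fin n → ℂ) ∈ W)
    (hXan : AnalyticOnNhd ℂ X W) (hX0 : X 0 = 0)
    (hreal : ∀ x, (∀ j, (x j).im = 0) → ∀ j, (X x j).im = 0) :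
    AdmitsPDNormalization ℝ (fun (x : Fin n → ℝ) (j : Fin n) =>
        (X (fun k => (x k : ℂ)) j).re) ↔
      AdmitsPDNormalization ℂ X := by
  have hX := hXan 0 h0W
  have hr : ∀ x, X (piOfReal n x) = piOfReal n (piRe n (X (piOfReal n x))) := fun x => by
    ext j
    exact Complex.ext (by simp) (by simpa using hreal (piOfReal n x) (by simp) j)
  exact ⟨AdmitsPDNormalization.complexify hX (.of_forall hr),
    AdmitsPDNormalization.descend hX (AnalyticAt.piRe_comp (by simpa using hX))
      (by ext j; simp [← Pi.zero_def, hX0]) (.of_forall hr)⟩
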